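/- arXiv:0801.2856 — 4 statements merged into one kernel-verified Lean document; each statement's English description precedes it below -/
import Mathlib

section
/- Let Γ be a completed primitive simple graph (hence 4-regular), let ab be an edge of Γ, and suppose that the common neighbours of a and b are exactly the two distinct vertices c and d (so the edge ab lies in exactly the two triangles (a,b,c) and (a,b,d)). Let e be the fourth neighbour of b, so that the neighbours of b are a, c, d, e. Then cd is not an edge of Γ and ae is not an edge of Γ, and the double-triangle-reduced graph Γ′ — the graph on the vertex set V(Γ)∖{b} obtained by deleting the vertex b together with its four incident edges and adding the two new edges cd and ae — is a completed primitive simple graph. -/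
/-!
Write `r` for the number of edges of `G - b` split by a set `A` of vertices other than `b`, `k` for
the number of neighbours of `b` in `A`, and `s` for the number of new edges `cd`, `ae` split by `A`.
Then `A` has cut size `r + k` in `G` and `r + s` in the reduced graph, and `A ∪ {b}` has cut size
`r + (4 - k)` in `G`. For a singleton `A` this gives 4-regularity of the reduced graph, since then
`s = k`. If both sides of `A` have two vertices, then `r + k ≥ 5` and `r + (4 - k) ≥ 5`, and hence
`r + s ≥ 5`, except when `k = 2` and `s = 0`, that is, when `a, e` lie on one side and `c, d` on the
other. In that case three of the four neighbours of `a` lie opposite to it once `b` is put there, so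
moving `a` across the cut removes at least two cut edges; this improves `r + 2 ≥ 5` to `r + 2 ≥ 7`.

The edge `ae` is absent because `e` is not a common neighbour of `a` and `b`, and `cd` is absent
because otherwise `{a, b, c, d}` would span a `K₄`, whose cut has size 4.
-/

open scoped Classical

/-- The set of edges of `G` with one endpoint in `A` and the other outside `A`. -/
noncomputable def cutEdges {V : Type*} [Fintype V] (G : SimpleGraph V) (A : Finset V) :
    Finset (Sym2 V) :=
  G.edgeFinset.filter (fun e => ∃ x, x ∈ e ∧ x ∈ A ∧ ∃ y, y ∈ e ∧ y ∉ A)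

/-- A finite simple graph is *completed primitive* if it is 4-regular, connected, has at
least 3 vertices, and every edge cut separating two parts with at least two vertices each
has size strictly greater than 4. -/
def CompletedPrimitive {V : Type*} [Fintype V] (G : SimpleGraph V) : Prop :=
  (∀ v : V, G.degree v = 4) ∧ G.Connected ∧ 3 ≤ Fintype.card V ∧
    ∀ A : Finset V, 2 ≤ A.card → 2 ≤ Aᶜ.card → 4 < (cutEdges G A).card

/-- The double-triangle-reduced graph: delete the vertex `b` (with its four incident
edges) and add the two new edges `cd` and `ae`. -/
def dtReduce {V : Type*} (G : SimpleGraph V) (a b c d e : V) :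
    SimpleGraph {x : V // x ≠ b} :=
  (SimpleGraph.fromRel
      (fun x y => G.Adj x y ∨ (x = c ∧ y = d) ∨ (x = a ∧ y = e))).induce
    {x : V | x ≠ b}

open scoped Finset

section Cuts

variable {V : Type*} [Fintype V] {G : SimpleGraph V} {S : Finset V} {u v : V}

lemma mk_mem_cutEdges : s(u, v) ∈ cutEdges G S ↔ G.Adj u v ∧ ¬(u ∈ S ↔ v ∈ S) := by
  simp only [cutEdges, Finset.mem_filter, SimpleGraph.mem_edgeFinset, SimpleGraph.mem_edgeSet,
    Sym2.mem_iff]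
  grind

lemma cutEdges_compl [DecidableEq V] : cutEdges G Sᶜ = cutEdges G S := by
  ext z
  induction z using Sym2.ind
  simp only [mk_mem_cutEdges, Finset.mem_compl, not_iff_not]

lemma card_cutEdges_sup_edge [DecidableEq V] (hadj : ¬G.Adj u v) (hne : u ≠ v) :
    #(cutEdges (G ⊔ SimpleGraph.edge u v) S) =
      #(cutEdges G S) + if u ∈ S ↔ v ∈ S then 0 else 1 := by
  have hnotMem : s(u, v) ∉ cutEdges G S := fun h => hadj (mk_mem_cutEdges.1 h).1
  split_ifs with hsplit
  · congr 1
    ext z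
    induction z using Sym2.ind
    simp only [mk_mem_cutEdges, SimpleGraph.sup_adj, SimpleGraph.edge_adj]
    grind
  · rw [← Finset.card_insert_of_notMem hnotMem]
    congr 1
    ext z
    induction z using Sym2.ind
    simp only [Finset.mem_insert, mk_mem_cutEdges, SimpleGraph.sup_adj, SimpleGraph.edge_adj,
      Sym2.eq_iff]
    grind

lemma filter_mem_cutEdges (hv : v ∉ S) :
    {z ∈ cutEdges G S | v ∈ z} = (G.neighborFinset v ∩ S).map (Sym2.mkEmbedding v) := by
  ext z
  induction z using Sym2.ind with
  | h x y =>
    simp only [Finset.mem_filter, mk_mem_cutEdges, Sym2.mem_iff, Finset.mem_map, Finset.mem_inter,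
      SimpleGraph.mem_neighborFinset, Sym2.mkEmbedding_apply, Sym2.eq_iff]
    grind [G.adj_comm]

variable (G)

lemma filter_notMem_cutEdges_map_subtype (A : Finset {x : V // x ≠ v}) :
    {z ∈ cutEdges G (A.map (.subtype _)) | v ∉ z} =
      (cutEdges (G.comap ((↑) : {x : V // x ≠ v} → V)) A).map
        (Function.Embedding.subtype _).sym2Map := by
  ext z
  induction z using Sym2.ind with
  | h x y =>
    by_cases hxy : x = v ∨ y = v
    · have hv : v ∈ s(x, y) := Sym2.mem_iff.2 (hxy.imp Eq.symm Eq.symm)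
      refine iff_of_false (fun h => (Finset.mem_filter.1 h).2 hv) fun h => ?_
      obtain ⟨z, -, hz⟩ := Finset.mem_map.1 h
      rw [← hz] at hv
      obtain ⟨w, -, hw⟩ := Sym2.mem_map.1 hv
      exact w.2 hw
    · push Not at hxy
      lift x to {x : V // x ≠ v} using hxy.1
      lift y to {x : V // x ≠ v} using hxy.2
      have hmk : s((x : V), (y : V)) = (Function.Embedding.subtype _).sym2Map s(x, y) := rfl
      rw [hmk, Finset.mem_map', mk_mem_cutEdges, ← hmk]
      simp [mk_mem_cutEdges, hxy.1, hxy.2, hxy.1.symm, hxy.2.symm]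

lemma card_cutEdges_map_subtype (A : Finset {x : V // x ≠ v}) :
    #(cutEdges G (A.map (.subtype _))) =
      #(cutEdges (G.comap ((↑) : {x : V // x ≠ v} → V)) A) +
        #(G.neighborFinset v ∩ A.map (.subtype _)) := by
  rw [← Finset.card_filter_add_card_filter_not (v ∈ ·), filter_mem_cutEdges (by simp),
    filter_notMem_cutEdges_map_subtype, Finset.card_map, Finset.card_map, add_comm]

lemma compl_insert_map_subtype [DecidableEq V] (A : Finset {x : V // x ≠ v}) :
    (insert v (A.map (.subtype _)))ᶜ = Aᶜ.map (.subtype _) := by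
  ext x
  by_cases hx : x = v <;> simp [hx]

lemma card_compl_le_card_compl_map_subtype (A : Finset {x : V // x ≠ v}) :
    #Aᶜ ≤ #(A.map (.subtype _))ᶜ := by
  rw [← Finset.card_map (.subtype _), ← compl_insert_map_subtype]
  exact Finset.card_le_card (Finset.compl_subset_compl.2 (Finset.subset_insert _ _))

lemma card_cutEdges_insert_map_subtype (A : Finset {x : V // x ≠ v}) :
    #(cutEdges G (insert v (A.map (.subtype _)))) =
      #(cutEdges (G.comap ((↑) : {x : V // x ≠ v} → V)) A) +
        #(G.neighborFinset v \ A.map (.subtype _)) := by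
  have hinter : G.neighborFinset v ∩ Aᶜ.map (.subtype _) =
      G.neighborFinset v \ A.map (.subtype _) := by
    ext x
    by_cases hx : x = v <;> simp [hx]
  rw [← cutEdges_compl, compl_insert_map_subtype, card_cutEdges_map_subtype, cutEdges_compl, hinter]

lemma card_cutEdges_insert (hv : v ∉ S) :
    #(cutEdges G (insert v S)) + #(G.neighborFinset v ∩ S) =
      #(cutEdges G S) + #(G.neighborFinset v \ S) := by
  obtain ⟨A, rfl⟩ : ∃ A : Finset {x : V // x ≠ v}, A.map (.subtype _) = S :=
    ⟨S.subtype _, Finset.subtype_map_of_mem fun x hx => ne_of_mem_of_not_mem hx hv⟩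
  rw [card_cutEdges_map_subtype, card_cutEdges_insert_map_subtype]
  ring

lemma card_cutEdges_erase (hv : v ∈ S) :
    #(cutEdges G (S.erase v)) + #(G.neighborFinset v \ S) =
      #(cutEdges G S) + #(G.neighborFinset v ∩ S) := by
  have hv' : v ∉ G.neighborFinset v := by simp
  have hinter : G.neighborFinset v ∩ S.erase v = G.neighborFinset v ∩ S := by grind
  have hsdiff : G.neighborFinset v \ S.erase v = G.neighborFinset v \ S := by grind
  simpa only [Finset.insert_erase hv, hinter, hsdiff] using
    (card_cutEdges_insert G (Finset.notMem_erase v S)).symm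

lemma card_cutEdges_singleton (v : V) : #(cutEdges G {v}) = G.degree v := by
  simpa [cutEdges] using card_cutEdges_insert G (Finset.notMem_empty v)

variable {G}

lemma card_cutEdges_of_isClique (hS : G.IsClique S) :
    #(cutEdges G S) + #S * (#S - 1) = ∑ v ∈ S, G.degree v := by
  induction S using Finset.induction with
  | empty => simp [cutEdges]
  | insert v S hv ih =>
    rw [Finset.coe_insert, SimpleGraph.isClique_insert_of_notMem (by simpa using hv)] at hS
    have hsub : S ⊆ G.neighborFinset v := fun w hw => by simpa using hS.2 w hw
    have hinsert := card_cutEdges_insert G hv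
    have hdeg := Finset.card_sdiff_add_card_inter (G.neighborFinset v) S
    rw [Finset.inter_eq_right.2 hsub] at hinsert hdeg
    rw [SimpleGraph.card_neighborFinset_eq_degree] at hdeg
    have hmul : (#S + 1) * #S = #S * (#S - 1) + 2 * #S := by
      cases #S with
      | zero => rfl
      | succ n => rw [Nat.add_sub_cancel]; ring
    rw [Finset.sum_insert hv, Finset.card_insert_of_notMem hv, ← ih hS.1, Nat.add_sub_cancel, hmul]
    lia

lemma connected_of_cutEdges_nonempty [DecidableEq V] [Nonempty V] (hadj : ∀ v, ∃ w, G.Adj v w)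
    (hcut : ∀ S : Finset V, 2 ≤ #S → 2 ≤ #Sᶜ → (cutEdges G S).Nonempty) : G.Connected := by
  refine ⟨fun u v => ?_⟩
  by_contra huv
  let S : Finset V := {w | G.Reachable u w}
  obtain ⟨u', hu'⟩ := hadj u
  obtain ⟨v', hv'⟩ := hadj v
  have hS : 2 ≤ #S :=
    Finset.one_lt_card.2 ⟨u, by simp [S], u', by simpa [S] using hu'.reachable, hu'.ne⟩
  have hSc : 2 ≤ #Sᶜ :=
    Finset.one_lt_card.2 ⟨v, by simpa [S] using huv, v', by
      simpa [S] using fun h : G.Reachable u v' => huv (h.trans hv'.symm.reachable), hv'.ne⟩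
  obtain ⟨z, hz⟩ := hcut S hS hSc
  induction z using Sym2.ind with
  | h x y =>
    obtain ⟨hxy, hsplit⟩ := mk_mem_cutEdges.1 hz
    refine hsplit ?_
    simpa [S] using ⟨fun h => h.trans hxy.reachable, fun h => h.trans hxy.symm.reachable⟩

lemma degree_add_two_le_card_of_not_adj (hne : u ≠ v) (hadj : ¬G.Adj u v) :
    G.degree u + 2 ≤ Fintype.card V := by
  have hsub : G.neighborFinset u ⊆ {u, v}ᶜ := fun w hw => by
    rw [SimpleGraph.mem_neighborFinset] at hw
    simpa using ⟨hw.ne', fun h => hadj (h ▸ hw)⟩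
  have hcard := Finset.card_add_card_compl {u, v}
  rw [Finset.card_pair hne] at hcard
  have hle := Finset.card_le_card hsub
  rw [SimpleGraph.card_neighborFinset_eq_degree] at hle
  lia

end Cuts

section CompletedPrimitive

variable {V : Type*} [Fintype V] {G : SimpleGraph V} {S : Finset V} {v w : V}

lemma completedPrimitive_of_isRegularOfDegree [DecidableEq V] [Nonempty V]
    (hreg : G.IsRegularOfDegree 4)
    (hcut : ∀ S : Finset V, 2 ≤ #S → 2 ≤ #Sᶜ → 4 < #(cutEdges G S)) : CompletedPrimitive G := by
  have hadj (v : V) : ∃ w, G.Adj v w :=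
    (G.degree_pos_iff_exists_adj v).1 (by rw [hreg v]; norm_num)
  have hcard : 4 < Fintype.card V := by
    simpa only [hreg _] using G.degree_lt_card_verts (Classical.arbitrary V)
  exact ⟨hreg, connected_of_cutEdges_nonempty hadj fun S hS hSc =>
    Finset.card_pos.1 ((Nat.zero_lt_succ _).trans (hcut S hS hSc)), by lia, by convert hcut⟩

lemma CompletedPrimitive.seven_le_card_cutEdges (hG : CompletedPrimitive G) (hv : v ∈ S)
    (hw : w ∈ S) (hne : v ≠ w) (hadj : ¬G.Adj v w) (hout : 3 ≤ #(G.neighborFinset v \ S))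
    (hSc : 2 ≤ #Sᶜ) : 7 ≤ #(cutEdges G S) := by
  obtain ⟨hreg, -, -, hcut⟩ := hG
  have hmove := card_cutEdges_erase G hv
  have hdeg := Finset.card_sdiff_add_card_inter (G.neighborFinset v) S
  rw [SimpleGraph.card_neighborFinset_eq_degree, hreg] at hdeg
  -- Moving `v` across the cut loses at least two edges and leaves a cut of size at least five,
  -- unless `S = {v, w}`, whose cut has size eight.
  by_cases hbig : 2 ≤ #(S.erase v)
  · have herase := hcut (S.erase v) hbig
      (hSc.trans (Finset.card_le_card (Finset.compl_subset_compl.2 (Finset.erase_subset v S))))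
    lia
  · have herase : S.erase v = {w} :=
      Finset.eq_singleton_iff_unique_mem.2 ⟨Finset.mem_erase.2 ⟨hne.symm, hw⟩, fun x hx =>
        Finset.card_le_one.1 (by lia) x hx w (Finset.mem_erase.2 ⟨hne.symm, hw⟩)⟩
    have hinter : G.neighborFinset v ∩ S = ∅ := by
      rw [← Finset.insert_erase hv, herase]
      ext x
      simp only [Finset.mem_inter, SimpleGraph.mem_neighborFinset]
      grind [G.irrefl]
    rw [herase, card_cutEdges_singleton, hreg] at hmove
    rw [hinter] at hmove hdeg
    simp only [Finset.card_empty] at hmove hdeg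
    lia

lemma CompletedPrimitive.four_lt_card_cutEdges_comap_add_card_inter (hG : CompletedPrimitive G)
    {A : Finset {x : V // x ≠ v}} (hA : 2 ≤ #A) (hAc : 2 ≤ #Aᶜ) :
    4 < #(cutEdges (G.comap ((↑) : {x : V // x ≠ v} → V)) A) +
      #(G.neighborFinset v ∩ A.map (.subtype _)) := by
  rw [← card_cutEdges_map_subtype]
  exact hG.2.2.2 _ (by rwa [Finset.card_map])
    (hAc.trans (card_compl_le_card_compl_map_subtype A))

lemma CompletedPrimitive.four_lt_card_cutEdges_comap_add_card_sdiff (hG : CompletedPrimitive G)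
    {A : Finset {x : V // x ≠ v}} (hA : 2 ≤ #A) (hAc : 2 ≤ #Aᶜ) :
    4 < #(cutEdges (G.comap ((↑) : {x : V // x ≠ v} → V)) A) +
      #(G.neighborFinset v \ A.map (.subtype _)) := by
  rw [← card_cutEdges_insert_map_subtype]
  refine hG.2.2.2 _ ?_ (by rwa [compl_insert_map_subtype, Finset.card_map])
  rw [Finset.card_insert_of_notMem (by simp), Finset.card_map]
  lia

end CompletedPrimitive

lemma dtReduce_eq_sup_edge {V : Type*} (G : SimpleGraph V) {b : V} (a c d e : {x : V // x ≠ b}) :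
    dtReduce G a b c d e =
      G.comap (↑) ⊔ SimpleGraph.edge c d ⊔ SimpleGraph.edge a e := by
  ext x y
  simp only [dtReduce, SimpleGraph.comap_adj, SimpleGraph.fromRel_adj, SimpleGraph.sup_adj,
    SimpleGraph.edge_adj, Function.Embedding.subtype_apply, Subtype.ext_iff, ne_eq]
  grind [G.irrefl, G.adj_comm]

/-- The configuration to which the double triangle reduction applies: the edge `ab` lies in exactly
the two triangles `abc` and `abd`, and `e` is the fourth neighbour of `b`. -/
structure IsDoubleTriangle {V : Type*} (G : SimpleGraph V) (a b c d e : V) : Prop where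
  adj_ab : G.Adj a b
  c_ne_d : c ≠ d
  adj_and_adj_iff : ∀ x, G.Adj a x ∧ G.Adj b x ↔ x = c ∨ x = d
  adj_b_iff : ∀ x, G.Adj b x ↔ x = a ∨ x = c ∨ x = d ∨ x = e
  e_ne_a : e ≠ a
  e_ne_c : e ≠ c
  e_ne_d : e ≠ d

namespace IsDoubleTriangle

section

variable {V : Type*} {G : SimpleGraph V} {a b c d e : V}

lemma adj_ac (h : IsDoubleTriangle G a b c d e) : G.Adj a c :=
  ((h.adj_and_adj_iff c).2 (.inl rfl)).1

lemma adj_ad (h : IsDoubleTriangle G a b c d e) : G.Adj a d :=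
  ((h.adj_and_adj_iff d).2 (.inr rfl)).1

lemma adj_bc (h : IsDoubleTriangle G a b c d e) : G.Adj b c :=
  ((h.adj_and_adj_iff c).2 (.inl rfl)).2

lemma adj_bd (h : IsDoubleTriangle G a b c d e) : G.Adj b d :=
  ((h.adj_and_adj_iff d).2 (.inr rfl)).2

lemma adj_be (h : IsDoubleTriangle G a b c d e) : G.Adj b e := by
  simp [h.adj_b_iff]

lemma not_adj_ae (h : IsDoubleTriangle G a b c d e) : ¬G.Adj a e := fun hae =>
  ((h.adj_and_adj_iff e).1 ⟨hae, h.adj_be⟩).elim h.e_ne_c h.e_ne_d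

lemma not_adj_cd [Fintype V] (h : IsDoubleTriangle G a b c d e) (hG : CompletedPrimitive G) :
    ¬G.Adj c d := by
  intro hcd
  obtain ⟨hreg, -, -, hcut⟩ := hG
  have hclique : G.IsClique ({a, b, c, d} : Finset V) := by
    simp [SimpleGraph.isClique_insert, h.adj_ab, h.adj_ac, h.adj_ad, h.adj_bc, h.adj_bd, hcd]
  have hcard : #{a, b, c, d} = 4 := by
    simp [h.adj_ab.ne, h.adj_ac.ne, h.adj_ad.ne, h.adj_bc.ne, h.adj_bd.ne, h.c_ne_d]
  have hcardV := degree_add_two_le_card_of_not_adj h.e_ne_a.symm h.not_adj_ae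
  have hcut_eq := card_cutEdges_of_isClique hclique
  have hcut_gt := hcut {a, b, c, d} (by lia) (by rw [Finset.card_compl, hcard, ← hreg a]; lia)
  simp only [hreg _, Finset.sum_const, hcard, smul_eq_mul] at hcut_eq
  lia

end

variable {V : Type*} {G : SimpleGraph V} {b : V} {a c d e : {x : V // x ≠ b}}

lemma nodup (h : IsDoubleTriangle G a b c d e) : [a, c, d, e].Nodup := by
  simp [Subtype.ext_iff, h.adj_ac.ne, h.adj_ad.ne, h.c_ne_d, h.e_ne_a.symm, h.e_ne_c.symm,
    h.e_ne_d.symm]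

variable [Fintype V]

lemma card_cutEdges_dtReduce (h : IsDoubleTriangle G a b c d e) (hcd : ¬G.Adj c d)
    (A : Finset {x : V // x ≠ b}) :
    #(cutEdges (dtReduce G a b c d e) A) =
      #(cutEdges (G.comap ((↑) : {x : V // x ≠ b} → V)) A) +
        (if c ∈ A ↔ d ∈ A then 0 else 1) + (if a ∈ A ↔ e ∈ A then 0 else 1) := by
  have hnodup := h.nodup
  simp only [List.nodup_cons, List.mem_cons, List.not_mem_nil, not_or] at hnodup
  rw [dtReduce_eq_sup_edge, card_cutEdges_sup_edge, card_cutEdges_sup_edge]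
  · exact hcd
  · exact hnodup.2.1.1
  · simp [SimpleGraph.edge_adj, h.not_adj_ae, hnodup]
  · exact hnodup.1.2.2.1

lemma card_neighborFinset_inter_map_subtype (h : IsDoubleTriangle G a b c d e)
    (A : Finset {x : V // x ≠ b}) :
    #(G.neighborFinset b ∩ A.map (.subtype _)) =
      (if a ∈ A then 1 else 0) + (if c ∈ A then 1 else 0) + (if d ∈ A then 1 else 0) +
        (if e ∈ A then 1 else 0) := by
  have hinter : G.neighborFinset b ∩ A.map (.subtype _) =
      ({x ∈ {a, c, d, e} | x ∈ A} : Finset {x : V // x ≠ b}).map (.subtype _) := by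
    ext x
    simp only [Finset.mem_inter, SimpleGraph.mem_neighborFinset, h.adj_b_iff, Finset.mem_map,
      Finset.mem_filter, Finset.mem_insert, Finset.mem_singleton, Function.Embedding.subtype_apply]
    grind
  have hnodup := h.nodup
  simp only [List.nodup_cons, List.mem_cons, List.not_mem_nil, not_or] at hnodup
  rw [hinter, Finset.card_map, Finset.card_filter, Finset.sum_insert (by simp [hnodup]),
    Finset.sum_insert (by simp [hnodup]), Finset.sum_insert (by simp [hnodup]),
    Finset.sum_singleton]
  ring

lemma degree_dtReduce (h : IsDoubleTriangle G a b c d e) (hcd : ¬G.Adj c d)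
    (v : {x : V // x ≠ b}) : (dtReduce G a b c d e).degree v = G.degree v := by
  have hmap := card_cutEdges_map_subtype G {v}
  have hred := h.card_cutEdges_dtReduce hcd {v}
  rw [h.card_neighborFinset_inter_map_subtype, Finset.map_singleton] at hmap
  simp only [Function.Embedding.subtype_apply, card_cutEdges_singleton, Finset.mem_singleton]
    at hmap hred
  have hnodup := h.nodup
  rw [hmap, hred]
  grind

lemma seven_le_card_cutEdges_comap_add_card_inter (h : IsDoubleTriangle G a b c d e)
    (hG : CompletedPrimitive G) {A : Finset {x : V // x ≠ b}} (ha : a ∈ A) (hc : c ∉ A)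
    (hd : d ∉ A) (he : e ∈ A) (hAc : 2 ≤ #Aᶜ) :
    7 ≤ #(cutEdges (G.comap ((↑) : {x : V // x ≠ b} → V)) A) +
      #(G.neighborFinset b ∩ A.map (.subtype _)) := by
  have hsub : {b, (c : V), (d : V)} ⊆ G.neighborFinset a \ A.map (.subtype _) := by
    simp [Finset.insert_subset_iff, h.adj_ab, h.adj_ac, h.adj_ad, hc, hd]
  have hout : 3 ≤ #(G.neighborFinset a \ A.map (.subtype _)) :=
    (Finset.card_eq_three.2 ⟨b, c, d, h.adj_bc.ne, h.adj_bd.ne, h.c_ne_d, rfl⟩).ge.trans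
      (Finset.card_le_card hsub)
  rw [← card_cutEdges_map_subtype]
  exact hG.seven_le_card_cutEdges (Finset.mem_map_of_mem _ ha) (Finset.mem_map_of_mem _ he)
    h.e_ne_a.symm h.not_adj_ae hout (hAc.trans (card_compl_le_card_compl_map_subtype A))

lemma four_lt_card_cutEdges_dtReduce_of_mem (h : IsDoubleTriangle G a b c d e)
    (hG : CompletedPrimitive G) {A : Finset {x : V // x ≠ b}} (haA : a ∈ A) (hA : 2 ≤ #A)
    (hAc : 2 ≤ #Aᶜ) : 4 < #(cutEdges (dtReduce G a b c d e) A) := by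
  have hinter := hG.four_lt_card_cutEdges_comap_add_card_inter hA hAc
  have hsdiff := hG.four_lt_card_cutEdges_comap_add_card_sdiff hA hAc
  have hdeg := Finset.card_sdiff_add_card_inter (G.neighborFinset b) (A.map (.subtype _))
  rw [SimpleGraph.card_neighborFinset_eq_degree, hG.1] at hdeg
  rw [h.card_cutEdges_dtReduce (h.not_adj_cd hG)]
  by_cases hcde : c ∉ A ∧ d ∉ A ∧ e ∈ A
  · obtain ⟨hc, hd, he⟩ := hcde
    have hseven := h.seven_le_card_cutEdges_comap_add_card_inter hG haA hc hd he hAc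
    have hk : #(G.neighborFinset b ∩ A.map (.subtype _)) = 2 := by
      simp [h.card_neighborFinset_inter_map_subtype, haA, hc, hd, he]
    lia
  · have hk := h.card_neighborFinset_inter_map_subtype A
    grind

theorem completedPrimitive_dtReduce (h : IsDoubleTriangle G a b c d e)
    (hG : CompletedPrimitive G) : CompletedPrimitive (dtReduce G a b c d e) := by
  have hreg : (dtReduce G a b c d e).IsRegularOfDegree 4 := fun v => by
    rw [h.degree_dtReduce (h.not_adj_cd hG), hG.1]
  have : Nonempty {x : V // x ≠ b} := ⟨a⟩
  refine completedPrimitive_of_isRegularOfDegree hreg fun A hA hAc => ?_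
  by_cases haA : a ∈ A
  · exact h.four_lt_card_cutEdges_dtReduce_of_mem hG haA hA hAc
  · rw [← cutEdges_compl]
    exact h.four_lt_card_cutEdges_dtReduce_of_mem hG (Finset.mem_compl.2 haA) hAc
      (by rwa [compl_compl])

end IsDoubleTriangle

/-- **Double triangle reduction preserves completed primitivity.** If in a completed
primitive graph the edge `ab` lies in exactly the two triangles `(a,b,c)` and `(a,b,d)`,
and `e` is the fourth neighbour of `b`, then `cd` and `ae` are non-edges and the
double-triangle-reduced graph is completed primitive. -/
theorem dtReduce_completedPrimitive {V : Type*} [Fintype V] (G : SimpleGraph V)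
    (hG : CompletedPrimitive G) (a b c d e : V)
    (hab : G.Adj a b) (hcd : c ≠ d)
    (hcommon : ∀ x : V, (G.Adj a x ∧ G.Adj b x) ↔ (x = c ∨ x = d))
    (hnb : ∀ x : V, G.Adj b x ↔ (x = a ∨ x = c ∨ x = d ∨ x = e))
    (hea : e ≠ a) (hec : e ≠ c) (hed : e ≠ d) :
    ¬ G.Adj c d ∧ ¬ G.Adj a e ∧ CompletedPrimitive (dtReduce G a b c d e) := by
  have h : IsDoubleTriangle G a b c d e := ⟨hab, hcd, hcommon, hnb, hea, hec, hed⟩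
  refine ⟨h.not_adj_cd hG, h.not_adj_ae, ?_⟩
  lift a to {x : V // x ≠ b} using h.adj_ab.ne
  lift c to {x : V // x ≠ b} using h.adj_bc.ne'
  lift d to {x : V // x ≠ b} using h.adj_bd.ne'
  lift e to {x : V // x ≠ b} using h.adj_be.ne'
  exact h.completedPrimitive_dtReduce hG
end

section
/- Let N ≥ 1 and let m, n be integers such that, in ZMod N, the four residues m, −m, n, −n are pairwise distinct and nonzero (equivalently: C^N_{m,n} is simple and 4-regular, i.e. 2m ≢ 0, 2n ≢ 0 and m ≢ ±n mod N), and such that gcd(m, n, N) = 1 (so C^N_{m,n} is connected). Then the cyclic graph C^N_{m,n} is completed primitive, with loop order ℓ = N − 2. -/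
open scoped Classical

/-- The cyclic (circulant) graph `C^N_{m,n}`: vertices `ZMod N`, two distinct vertices
`i`, `j` adjacent iff `i − j ≡ ±m` or `i − j ≡ ±n (mod N)`. -/
def cyclicGraph (N : ℕ) (m n : ZMod N) : SimpleGraph (ZMod N) :=
  SimpleGraph.fromRel (fun i j => i - j = m ∨ i - j = -m ∨ i - j = n ∨ i - j = -n)

/-!
Let `A` be a set of vertices such that `A` and `Aᶜ` have at least two elements, and call `a ∈ A` an
exit of `A` along `s` if `a + s ∉ A`. There are as many exits along `s` as along `-s`, so the cut
at `A` has `2 (p + q)` edges, where `p` and `q` count the exits along `m` and along `n`, and the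
claim is that `p + q ≥ 3`.

If `p = 0`, then `A` and its set of exits along `n` are unions of cosets of `⟨m⟩`. That set of exits
is nonempty because `m` and `n` generate, so `q` is at least the order of `m`, which is at least
three. The case `q = 0` is symmetric.

If `p = q = 1`, let `a` and `b` be the exits along `m` and along `n`. If `a = b`, then following the
squares with sides `m` and `n` shows that `a` has no neighbour in `A`; hence `A \ {a}` is stable
under both steps and `A = {a}`. If `a ≠ b`, the squares at `a` and at `b` show that the exits of
`Aᶜ` along `m` and `n` are `b + n` and `a + m`. These coincide, for otherwise the same argument
applied to `Aᶜ` gives `b = b + n + m`; so `Aᶜ` is a singleton by the first case.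
-/

section Exits

open scoped Pointwise

variable {G : Type*} [AddCommGroup G] {A : Finset G} {S : Set G} {a b m n s : G}

/-- The points of `A` that the step `s` takes out of `A`; the pairs `(a, a + s)` with
`a ∈ exits A s` are the edges in direction `s` of the cut at `A`. -/
noncomputable def exits (A : Finset G) (s : G) : Finset G :=
  {a ∈ A | a + s ∉ A}

lemma mem_exits : a ∈ exits A s ↔ a ∈ A ∧ a + s ∉ A :=
  Finset.mem_filter

lemma card_exits_neg (A : Finset G) (s : G) : (exits A (-s)).card = (exits A s).card := by
  have exits_eq (t : G) : exits A t = A \ (-t +ᵥ A) := by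
    ext a
    simp [mem_exits, Finset.mem_neg_vadd_finset_iff, add_comm]
  calc (exits A (-s)).card
      = (-s +ᵥ (A \ (s +ᵥ A))).card := by rw [exits_eq, neg_neg, Finset.card_vadd_finset]
    _ = ((-s +ᵥ A) \ A).card := by rw [Finset.vadd_finset_sdiff, neg_vadd_vadd]
    _ = (A \ (-s +ᵥ A)).card := Finset.card_sdiff_comm (Finset.card_vadd_finset _ _)
    _ = (exits A s).card := by rw [exits_eq]

lemma card_exits_compl [Fintype G] (A : Finset G) (s : G) :
    (exits Aᶜ s).card = (exits A s).card := by
  have translate_exits_compl : s +ᵥ exits Aᶜ s = exits A (-s) := by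
    ext a
    simp [← Finset.neg_vadd_mem_iff, mem_exits, add_comm, and_comm]
  rw [← card_exits_neg A, ← translate_exits_compl, Finset.card_vadd_finset]

lemma exits_eq_empty_iff_mem_stabilizer : exits A s = ∅ ↔ s ∈ AddAction.stabilizer G A := by
  rw [AddAction.mem_stabilizer_finset']
  simp [Finset.eq_empty_iff_forall_notMem, mem_exits, add_comm s]

lemma stabilizer_le_stabilizer_exits (A : Finset G) (s : G) :
    AddAction.stabilizer G A ≤ AddAction.stabilizer G (exits A s) := by
  intro t ht
  rw [AddAction.mem_stabilizer_finset] at ht ⊢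
  intro a
  rw [mem_exits, mem_exits, ht a, vadd_eq_add, add_assoc, ← vadd_eq_add, ht (a + s)]

lemma addOrderOf_le_card_of_mem_stabilizer (hA : A.Nonempty)
    (hs : s ∈ AddAction.stabilizer G A) : addOrderOf s ≤ A.card := by
  obtain ⟨a, ha⟩ := hA
  refine Finset.le_card_of_inj_on_range (fun i ↦ i • s + a) (fun i _ ↦ ?_)
    fun i hi j hj hij ↦ nsmul_injOn_Iio_addOrderOf hi hj (add_right_cancel hij)
  exact (AddAction.mem_stabilizer_finset.1 (nsmul_mem hs i) a).2 ha

lemma eq_empty_or_forall_mem_of_exits_eq_empty (hS : AddSubgroup.closure S = ⊤)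
    (h : ∀ s ∈ S, exits A s = ∅) : A = ∅ ∨ ∀ b, b ∈ A := by
  have stabilizer_eq_top : AddAction.stabilizer G A = ⊤ :=
    top_unique (hS ▸ (AddSubgroup.closure_le _).2 fun s hs ↦
      exits_eq_empty_iff_mem_stabilizer.1 (h s hs))
  refine A.eq_empty_or_nonempty.imp_right fun ⟨a, ha⟩ b ↦ ?_
  have hmem : b - a ∈ AddAction.stabilizer G A := stabilizer_eq_top ▸ AddSubgroup.mem_top _
  simpa using (AddAction.mem_stabilizer_finset.1 hmem a).2 ha

lemma addOrderOf_le_card_exits (hgen : AddSubgroup.closure {m, n} = ⊤)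
    (hA : A.Nonempty) (hb : b ∉ A) (hm : exits A m = ∅) :
    addOrderOf m ≤ (exits A n).card := by
  refine addOrderOf_le_card_of_mem_stabilizer (Finset.nonempty_iff_ne_empty.2 fun hn ↦ ?_)
    (stabilizer_le_stabilizer_exits A n (exits_eq_empty_iff_mem_stabilizer.1 hm))
  rcases eq_empty_or_forall_mem_of_exits_eq_empty hgen (A := A) (by simp [hm, hn]) with h | h
  · exact hA.ne_empty h
  · exact hb (h b)

lemma add_mem_of_exits_eq_singleton (hs : exits A s = {a}) (hb : b ∈ A) (hba : b ≠ a) :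
    b + s ∈ A := by
  by_contra h
  exact hba (Finset.mem_singleton.1 (hs ▸ mem_exits.2 ⟨hb, h⟩))

lemma mem_and_add_notMem_of_exits_eq_singleton (hs : exits A s = {a}) : a ∈ A ∧ a + s ∉ A :=
  mem_exits.1 (hs ▸ Finset.mem_singleton_self a)

lemma sub_notMem_of_exits_eq_singleton (hm0 : m ≠ 0) (hmn : m ≠ n) (hm : exits A m = {a})
    (hn : exits A n = {a}) : a - m ∉ A := by
  intro h
  have hmem : a - m + n ∈ A := add_mem_of_exits_eq_singleton hn h (by simpa using hm0)
  have hne : a - m + n ≠ a := by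
    rw [sub_add_eq_add_sub, Ne, sub_eq_iff_eq_add, add_left_cancel_iff]
    exact hmn.symm
  have hmem' : a + n ∈ A := by
    simpa [sub_add_eq_add_sub] using add_mem_of_exits_eq_singleton hm hmem hne
  exact (mem_and_add_notMem_of_exits_eq_singleton hn).2 hmem'

lemma exits_erase_eq_empty (hs : exits A s = {a}) (ha : a - s ∉ A) : exits (A.erase a) s = ∅ := by
  refine Finset.eq_empty_of_forall_notMem fun b hb ↦ ?_
  obtain ⟨hb, hbs⟩ := mem_exits.1 hb
  obtain ⟨hba, hbA⟩ := Finset.mem_erase.1 hb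
  refine hbs (Finset.mem_erase.2 ⟨?_, add_mem_of_exits_eq_singleton hs hbA hba⟩)
  rintro rfl
  exact ha (by simpa using hbA)

lemma eq_singleton_of_exits_eq_singleton (hgen : AddSubgroup.closure {m, n} = ⊤)
    (hm0 : m ≠ 0) (hn0 : n ≠ 0) (hmn : m ≠ n) (hm : exits A m = {a}) (hn : exits A n = {a}) :
    A = {a} := by
  have hm' := exits_erase_eq_empty hm (sub_notMem_of_exits_eq_singleton hm0 hmn hm hn)
  have hn' := exits_erase_eq_empty hn (sub_notMem_of_exits_eq_singleton hn0 hmn.symm hn hm)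
  rcases eq_empty_or_forall_mem_of_exits_eq_empty hgen (A := A.erase a) (by simp [hm', hn'])
    with h | h
  · rw [← Finset.insert_erase (mem_and_add_notMem_of_exits_eq_singleton hm).1, h, insert_empty_eq]
  · exact absurd (h a) (Finset.notMem_erase a A)

lemma exits_compl_eq_singleton [Fintype G] (hn0 : n ≠ 0) (hab : a ≠ b) (hm : exits A m = {a})
    (hn : exits A n = {b}) : exits Aᶜ n = {a + m} := by
  obtain ⟨haA, ham⟩ := mem_and_add_notMem_of_exits_eq_singleton hm
  have han : a + n ∈ A := add_mem_of_exits_eq_singleton hn haA hab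
  have hamn : a + m + n ∈ A := by
    simpa [add_right_comm] using add_mem_of_exits_eq_singleton hm han (by simpa using hn0)
  have hcard : (exits Aᶜ n).card = 1 := by rw [card_exits_compl, hn, Finset.card_singleton]
  exact (Finset.eq_of_subset_of_card_le
    (by simpa [mem_exits] using And.intro ham hamn) (by simp [hcard])).symm

lemma eq_singleton_or_compl_eq_singleton [Fintype G] (hgen : AddSubgroup.closure {m, n} = ⊤)
    (hm0 : m ≠ 0) (hn0 : n ≠ 0) (hmn : m ≠ n) (hmn' : m ≠ -n) (hm : exits A m = {a})
    (hn : exits A n = {b}) : A = {a} ∨ Aᶜ = {a + m} := by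
  rcases eq_or_ne a b with rfl | hab
  · exact .inl (eq_singleton_of_exits_eq_singleton hgen hm0 hn0 hmn hm hn)
  have hcn : exits Aᶜ n = {a + m} := exits_compl_eq_singleton hn0 hab hm hn
  have hcm : exits Aᶜ m = {b + n} := exits_compl_eq_singleton hm0 hab.symm hn hm
  rcases eq_or_ne (b + n) (a + m) with hba | hba
  · exact .inr (eq_singleton_of_exits_eq_singleton hgen hm0 hn0 hmn (hba ▸ hcm) hcn)
  have hb : b = b + n + m := by
    simpa [hn] using exits_compl_eq_singleton hn0 hba hcm hcn
  rw [add_assoc, left_eq_add, add_comm] at hb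
  exact absurd (eq_neg_of_add_eq_zero_left hb) hmn'

lemma three_le_addOrderOf [Finite G] (hs : s ≠ -s) : 3 ≤ addOrderOf s := by
  have pos : 0 < addOrderOf s := addOrderOf_pos s
  have ne_one : addOrderOf s ≠ 1 := fun h ↦ hs (by simp [AddMonoid.addOrderOf_eq_one_iff.1 h])
  have ne_two : addOrderOf s ≠ 2 := fun h ↦
    hs (eq_neg_of_add_eq_zero_left (by rw [← two_nsmul, ← h, addOrderOf_nsmul_eq_zero]))
  omega

lemma ne_zero_of_ne_neg (hs : s ≠ -s) : s ≠ 0 := by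
  rintro rfl
  simp at hs

lemma three_le_card_exits_add_card_exits [Fintype G] (hgen : AddSubgroup.closure {m, n} = ⊤)
    (h2m : m ≠ -m) (h2n : n ≠ -n) (hmn : m ≠ n) (hmn' : m ≠ -n) (hA : 2 ≤ A.card)
    (hAc : 2 ≤ Aᶜ.card) : 3 ≤ (exits A m).card + (exits A n).card := by
  have hA₀ : A.Nonempty := Finset.card_pos.1 (by omega)
  obtain ⟨c, hc⟩ : Aᶜ.Nonempty := Finset.card_pos.1 (by omega)
  rw [Finset.mem_compl] at hc
  rcases (exits A m).eq_empty_or_nonempty with hm | hm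
  · have := addOrderOf_le_card_exits hgen hA₀ hc hm
    have := three_le_addOrderOf h2m
    omega
  rcases (exits A n).eq_empty_or_nonempty with hn | hn
  · have := addOrderOf_le_card_exits (Set.pair_comm m n ▸ hgen) hA₀ hc hn
    have := three_le_addOrderOf h2n
    omega
  by_contra! hlt
  have hm_pos := hm.card_pos
  have hn_pos := hn.card_pos
  obtain ⟨a, ha⟩ := Finset.card_eq_one.1 (by omega : (exits A m).card = 1)
  obtain ⟨b, hb⟩ := Finset.card_eq_one.1 (by omega : (exits A n).card = 1)
  rcases eq_singleton_or_compl_eq_singleton hgen (ne_zero_of_ne_neg h2m) (ne_zero_of_ne_neg h2n)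
    hmn hmn' ha hb with h | h
  · simp [h] at hA
  · simp [h] at hAc

end Exits

section Circulant

open SimpleGraph
open scoped Pointwise

lemma mem_cutEdges {V : Type*} [Fintype V] {Γ : SimpleGraph V} {A : Finset V} {e : Sym2 V} :
    e ∈ cutEdges Γ A ↔ ∃ a ∈ A, ∃ b ∉ A, Γ.Adj a b ∧ e = s(a, b) := by
  rw [cutEdges, Finset.mem_filter, mem_edgeFinset]
  constructor
  · rintro ⟨he, a, hae, ha, b, hbe, hb⟩
    obtain rfl := (Sym2.mem_and_mem_iff (ne_of_mem_of_not_mem ha hb)).1 ⟨hae, hbe⟩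
    exact ⟨a, ha, b, hb, he, rfl⟩
  · rintro ⟨a, ha, b, hb, hab, rfl⟩
    exact ⟨hab, a, Sym2.mem_mk_left a b, ha, b, Sym2.mem_mk_right a b, hb⟩

lemma circulantGraph_connected {G : Type*} [AddGroup G] {S : Set G}
    (hS : AddSubgroup.closure S = ⊤) : (circulantGraph S).Connected := by
  have reachable_add {s : G} (hs : s ∈ S) (v : G) : (circulantGraph S).Reachable v (s + v) := by
    rcases eq_or_ne v (s + v) with h | h
    · exact h ▸ .rfl
    · exact Adj.reachable (by simpa [h] using Or.inr hs)
  refine (connected_iff_exists_forall_reachable _).2 ⟨0, fun v ↦ ?_⟩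
  have hv : v ∈ AddSubgroup.closure S := hS ▸ AddSubgroup.mem_top v
  induction hv using AddSubgroup.closure_induction_left with
  | zero => exact .rfl
  | add_left s hs v _ ih => exact ih.trans (reachable_add hs v)
  | neg_add_cancel s hs v _ ih =>
    exact ih.trans (by simpa using (reachable_add hs (-s + v)).symm)

variable {G : Type*} [AddCommGroup G] {S : Finset G} {m n : G}

lemma circulantGraph_adj_iff (h0 : 0 ∉ S) (hneg : ∀ s ∈ S, -s ∈ S) {v w : G} :
    (circulantGraph (S : Set G)).Adj v w ↔ w - v ∈ S := by
  have hsymm : v - w ∈ S ↔ w - v ∈ S :=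
    ⟨fun h ↦ by simpa using hneg _ h, fun h ↦ by simpa using hneg _ h⟩
  rw [circulantGraph_adj, Finset.mem_coe, Finset.mem_coe, hsymm, or_self, and_iff_right_iff_imp]
  rintro h rfl
  exact h0 (by simpa using h)

lemma circulantGraph_degree (h0 : 0 ∉ S) (hneg : ∀ s ∈ S, -s ∈ S) (v : G)
    [Fintype ((circulantGraph (S : Set G)).neighborSet v)] :
    (circulantGraph (S : Set G)).degree v = S.card := by
  have neighborFinset_eq : (circulantGraph (S : Set G)).neighborFinset v = v +ᵥ S := by
    ext w
    rw [mem_neighborFinset, circulantGraph_adj_iff h0 hneg, ← Finset.neg_vadd_mem_iff,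
      vadd_eq_add, neg_add_eq_sub]
  rw [← card_neighborFinset_eq_degree, neighborFinset_eq, Finset.card_vadd_finset]

lemma card_cutEdges_circulantGraph [Fintype G] (h0 : 0 ∉ S) (hneg : ∀ s ∈ S, -s ∈ S)
    (A : Finset G) :
    (cutEdges (circulantGraph (S : Set G)) A).card = ∑ s ∈ S, (exits A s).card := by
  rw [← Finset.card_sigma]
  refine (Finset.card_bij (fun p _ ↦ s(p.2, p.2 + p.1)) ?_ ?_ ?_).symm
  · rintro ⟨s, a⟩ h
    obtain ⟨hs, ha, has⟩ : s ∈ S ∧ a ∈ A ∧ a + s ∉ A := by simpa [mem_exits] using h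
    exact mem_cutEdges.2
      ⟨a, ha, a + s, has, (circulantGraph_adj_iff h0 hneg).2 (by simpa using hs), rfl⟩
  · rintro ⟨s, a⟩ h ⟨t, b⟩ h' heq
    simp only [Finset.mem_sigma, mem_exits] at h h'
    rcases Sym2.eq_iff.1 heq with ⟨rfl, hst⟩ | ⟨hab, -⟩
    · rw [(add_left_cancel hst : s = t)]
    · exact absurd (hab ▸ h.2.1) h'.2.2
  · intro e he
    obtain ⟨a, ha, b, hb, hab, rfl⟩ := mem_cutEdges.1 he
    have hba : b - a ∈ S := (circulantGraph_adj_iff h0 hneg).1 hab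
    exact ⟨⟨b - a, a⟩, by simp [hba, mem_exits, ha, hb], by simp⟩

lemma circulantGraph_pair_eq (m n : G) :
    circulantGraph {m, n} = circulantGraph (({m, -m, n, -n} : Finset G) : Set G) := by
  rw [circulantGraph_eq_symm]
  congr 1
  ext s
  simp [or_comm, or_left_comm, or_assoc]

lemma sum_pm_pair (f : G → ℕ) (h2m : m ≠ -m) (h2n : n ≠ -n) (hmn : m ≠ n) (hmn' : m ≠ -n) :
    ∑ s ∈ ({m, -m, n, -n} : Finset G), f s = f m + f (-m) + f n + f (-n) := by
  rw [Finset.sum_insert, Finset.sum_insert, Finset.sum_pair h2n]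
  · ring
  all_goals grind

theorem cyclicGraph_completedPrimitive_general [Fintype G]
    (hgen : AddSubgroup.closure {m, n} = ⊤) (h2m : m ≠ -m) (h2n : n ≠ -n) (hmn : m ≠ n)
    (hmn' : m ≠ -n) : CompletedPrimitive (circulantGraph {m, n}) := by
  have h0 : 0 ∉ ({m, -m, n, -n} : Finset G) := by
    simp [eq_comm (a := (0 : G)), ne_zero_of_ne_neg h2m, ne_zero_of_ne_neg h2n]
  have hneg : ∀ s ∈ ({m, -m, n, -n} : Finset G), -s ∈ ({m, -m, n, -n} : Finset G) := by
    simp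
  have hcard : ({m, -m, n, -n} : Finset G).card = 4 := by
    rw [Finset.card_eq_sum_ones, sum_pm_pair _ h2m h2n hmn hmn']
  have hconn := circulantGraph_connected hgen
  rw [circulantGraph_pair_eq] at hconn ⊢
  refine ⟨fun v ↦ ?_, hconn, ?_, fun A hA hAc ↦ ?_⟩
  · rw [circulantGraph_degree h0 hneg, hcard]
  · have := Finset.card_le_univ ({m, -m, n, -n} : Finset G)
    omega
  · have := three_le_card_exits_add_card_exits hgen h2m h2n hmn hmn' hA hAc
    rw [card_cutEdges_circulantGraph h0 hneg,
      sum_pm_pair _ h2m h2n hmn hmn', card_exits_neg, card_exits_neg]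
    omega

end Circulant

lemma cyclicGraph_eq_circulantGraph (N : ℕ) (m n : ZMod N) :
    cyclicGraph N m n = SimpleGraph.circulantGraph {m, n} := by
  rw [circulantGraph_pair_eq]
  simp [cyclicGraph, SimpleGraph.circulantGraph]

lemma closure_intCast_pair_eq_top {N : ℕ} {m n : ℤ}
    (hgcd : Int.gcd m (Int.gcd n (N : ℤ)) = 1) :
    AddSubgroup.closure {(m : ZMod N), (n : ZMod N)} = ⊤ := by
  obtain ⟨a, d, hbezout⟩ := Int.isCoprime_iff_gcd_eq_one.2 hgcd
  rw [Int.gcd_eq_gcd_ab n N] at hbezout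
  have hone : (a : ZMod N) * m + (d * Int.gcdA n N : ℤ) * n = 1 := by
    have := congrArg (Int.cast : ℤ → ZMod N) hbezout
    push_cast [ZMod.natCast_self] at this ⊢
    linear_combination this
  refine (AddSubgroup.eq_top_iff' _).2 fun z ↦ ?_
  obtain ⟨k, rfl⟩ := ZMod.intCast_surjective z
  refine AddSubgroup.mem_closure_pair.2 ⟨k * a, k * (d * Int.gcdA n N), ?_⟩
  simp only [zsmul_eq_mul]
  push_cast at hone ⊢
  linear_combination (k : ZMod N) * hone

/-- A simple, 4-regular (`m, −m, n, −n` pairwise distinct and nonzero mod `N`), connected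
(`gcd(m,n,N) = 1`) cyclic graph `C^N_{m,n}` is completed primitive, with loop order
`ℓ = N − 2`. -/
theorem cyclicGraph_completedPrimitive (N : ℕ) [NeZero N] (m n : ℤ)
    (hm0 : (m : ZMod N) ≠ 0) (hn0 : (n : ZMod N) ≠ 0)
    (h2m : (m : ZMod N) ≠ -(m : ZMod N)) (h2n : (n : ZMod N) ≠ -(n : ZMod N))
    (hmn : (m : ZMod N) ≠ (n : ZMod N)) (hmn' : (m : ZMod N) ≠ -(n : ZMod N))
    (hgcd : Int.gcd m (Int.gcd n (N : ℤ)) = 1) :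
    CompletedPrimitive (cyclicGraph N (m : ZMod N) (n : ZMod N)) ∧
    Fintype.card (ZMod N) - 2 = N - 2 := by
  refine ⟨?_, by rw [ZMod.card]⟩
  rw [cyclicGraph_eq_circulantGraph]
  exact cyclicGraph_completedPrimitive_general (closure_intCast_pair_eq_top hgcd) h2m h2n hmn hmn'
end

section
/- The Lebesgue integral over three-dimensional Euclidean space ∫_{ℝ³} (1 + ‖p‖²)^{−2} dp equals π². (Equivalently, the period of the one-loop completed primitive graph P₁ equals 1.) -/
/-!
Schwinger's trick writes the propagator as a superposition of Gaussians,
`Γ(s) (m + ‖p‖²)⁻ˢ = ∫₀^∞ tˢ⁻¹ exp (-(m + ‖p‖²) t) dt`.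
Integrating over `p` first, each Gaussian contributes `(π / t) ^ (d / 2)` in dimension `d`, and what
remains is an Euler integral for `Γ(s - d / 2)`. For `d = 3`, `s = 2`, `m = 1` the value is
`π ^ (3 / 2) * Γ(1 / 2) / Γ(2) = π²`.
-/

open MeasureTheory Module Real Set

lemma integral_Ioi_rpow_mul_exp_neg_mul_eq_Gamma_mul_rpow_neg {s x : ℝ} (hs : 0 < s) (hx : 0 < x) :
    ∫ t in Ioi (0 : ℝ), t ^ (s - 1) * exp (-(x * t)) = Gamma s * x ^ (-s) := by
  rw [integral_rpow_mul_exp_neg_mul_Ioi hs hx, one_div, inv_rpow hx.le, rpow_neg hx.le, mul_comm]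

section SchwingerParametrization

variable {V : Type*} [NormedAddCommGroup V] [InnerProductSpace ℝ V] [FiniteDimensional ℝ V]
  [MeasurableSpace V] [BorelSpace V]

lemma integral_rpow_mul_exp_neg_add_sq_norm_mul (s m : ℝ) {t : ℝ} (ht : 0 < t) :
    ∫ p : V, t ^ (s - 1) * exp (-((m + ‖p‖ ^ 2) * t)) =
      π ^ (finrank ℝ V / 2 : ℝ) * (t ^ (s - finrank ℝ V / 2 - 1) * exp (-(m * t))) := by
  have gaussian_factor (p : V) : t ^ (s - 1) * exp (-((m + ‖p‖ ^ 2) * t)) =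
      t ^ (s - 1) * exp (-(m * t)) * exp (-t * ‖p‖ ^ 2) := by
    rw [mul_assoc, ← exp_add]
    ring_nf
  have rpow_split : t ^ (s - finrank ℝ V / 2 - 1) = t ^ (s - 1) / t ^ (finrank ℝ V / 2 : ℝ) := by
    rw [← rpow_sub ht]
    ring_nf
  simp_rw [gaussian_factor]
  rw [integral_const_mul, GaussianFourier.integral_rexp_neg_mul_sq_norm ht,
    div_rpow pi_nonneg ht.le, rpow_split]
  ring

lemma integrable_prod_rpow_mul_exp_neg_add_sq_norm_mul {s m : ℝ} (hs : finrank ℝ V / 2 < s)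
    (hm : 0 < m) :
    Integrable (fun z : V × ℝ ↦ z.2 ^ (s - 1) * exp (-((m + ‖z.1‖ ^ 2) * z.2)))
      (volume.prod (volume.restrict (Ioi 0))) := by
  have measurable_integrand :
      Measurable fun z : V × ℝ ↦ z.2 ^ (s - 1) * exp (-((m + ‖z.1‖ ^ 2) * z.2)) := by
    fun_prop
  rw [integrable_prod_iff' measurable_integrand.aestronglyMeasurable]
  constructor
  · filter_upwards [ae_restrict_mem measurableSet_Ioi] with t (ht : 0 < t)
    refine .of_integral_ne_zero ?_
    rw [integral_rpow_mul_exp_neg_add_sq_norm_mul s m ht]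
    positivity
  · have exponent_pos : 0 < s - finrank ℝ V / 2 := sub_pos.mpr hs
    have euler_integrable : IntegrableOn
        (fun t : ℝ ↦ t ^ (s - finrank ℝ V / 2 - 1) * exp (-(m * t))) (Ioi 0) := by
      refine .of_integral_ne_zero ?_
      rw [integral_rpow_mul_exp_neg_mul_Ioi exponent_pos hm]
      positivity [Gamma_pos_of_pos exponent_pos]
    refine (euler_integrable.const_mul (π ^ (finrank ℝ V / 2 : ℝ))).congr ?_
    filter_upwards [ae_restrict_mem measurableSet_Ioi] with t (ht : 0 < t)
    rw [← integral_rpow_mul_exp_neg_add_sq_norm_mul s m ht]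
    congr with p
    exact (norm_of_nonneg (by positivity)).symm

theorem integral_one_loop_general {s m : ℝ} (hs : finrank ℝ V / 2 < s) (hm : 0 < m) :
    ∫ p : V, (m + ‖p‖ ^ 2) ^ (-s) =
      π ^ (finrank ℝ V / 2 : ℝ) * Gamma (s - finrank ℝ V / 2) / Gamma s *
        m ^ (finrank ℝ V / 2 - s) := by
  have s_pos : 0 < s := lt_of_le_of_lt (by positivity) hs
  have schwinger (p : V) : Gamma s * (m + ‖p‖ ^ 2) ^ (-s) =
      ∫ t in Ioi (0 : ℝ), t ^ (s - 1) * exp (-((m + ‖p‖ ^ 2) * t)) :=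
    (integral_Ioi_rpow_mul_exp_neg_mul_eq_Gamma_mul_rpow_neg s_pos (by positivity)).symm
  suffices Gamma s * ∫ p : V, (m + ‖p‖ ^ 2) ^ (-s) =
      π ^ (finrank ℝ V / 2 : ℝ) *
        (Gamma (s - finrank ℝ V / 2) * m ^ (-(s - finrank ℝ V / 2))) by
    rw [div_mul_eq_mul_div, eq_div_iff (Gamma_pos_of_pos s_pos).ne', mul_comm, this, neg_sub,
      mul_assoc]
  calc Gamma s * ∫ p : V, (m + ‖p‖ ^ 2) ^ (-s)
      = ∫ p : V, ∫ t in Ioi (0 : ℝ), t ^ (s - 1) * exp (-((m + ‖p‖ ^ 2) * t)) := by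
        simp_rw [← integral_const_mul, schwinger]
    _ = ∫ t in Ioi (0 : ℝ), ∫ p : V, t ^ (s - 1) * exp (-((m + ‖p‖ ^ 2) * t)) :=
        integral_integral_swap (integrable_prod_rpow_mul_exp_neg_add_sq_norm_mul hs hm)
    _ = ∫ t in Ioi (0 : ℝ), π ^ (finrank ℝ V / 2 : ℝ) *
          (t ^ (s - finrank ℝ V / 2 - 1) * exp (-(m * t))) :=
        setIntegral_congr_fun measurableSet_Ioi fun _ ht ↦
          integral_rpow_mul_exp_neg_add_sq_norm_mul s m ht
    _ = π ^ (finrank ℝ V / 2 : ℝ) *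
          (Gamma (s - finrank ℝ V / 2) * m ^ (-(s - finrank ℝ V / 2))) := by
        rw [integral_const_mul,
          integral_Ioi_rpow_mul_exp_neg_mul_eq_Gamma_mul_rpow_neg (sub_pos.mpr hs) hm]

lemma integral_inv_one_add_sq_norm_pow {n : ℕ} (hn : (finrank ℝ V / 2 : ℝ) < n) :
    ∫ p : V, ((1 + ‖p‖ ^ 2) ^ n)⁻¹ =
      π ^ (finrank ℝ V / 2 : ℝ) * Gamma (n - finrank ℝ V / 2) / Gamma n := by
  have inv_pow_eq_rpow (p : V) : ((1 + ‖p‖ ^ 2) ^ n)⁻¹ = (1 + ‖p‖ ^ 2) ^ (-n : ℝ) := by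
    rw [rpow_neg (by positivity), rpow_natCast]
  simp_rw [inv_pow_eq_rpow]
  rw [integral_one_loop_general hn one_pos, one_rpow, mul_one]

end SchwingerParametrization

lemma pi_rpow_three_halves_mul_Gamma_one_half : π ^ (3 / 2 : ℝ) * Gamma (1 / 2) = π ^ 2 := by
  rw [Gamma_one_half_eq, sqrt_eq_rpow, ← rpow_add pi_pos]
  norm_num

/-- The period of the one-loop completed primitive graph `P₁`:
`∫_{ℝ³} (1 + ‖p‖²)⁻² dp = π²`. -/
theorem integral_one_loop :
    (∫ p : EuclideanSpace ℝ (Fin 3), ((1 + ‖p‖ ^ 2) ^ 2)⁻¹) = Real.pi ^ 2 := by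
  rw [integral_inv_one_add_sq_norm_pow (by norm_num), ← pi_rpow_three_halves_mul_Gamma_one_half]
  norm_num
end

section
/- Let e ∈ ℝ⁴ be any unit vector. Then the Lebesgue integral ∫_{ℝ⁴×ℝ⁴} ( ‖e − x‖² · ‖x‖² · ‖x − y‖² · ‖y‖² · ‖y − e‖² )^{−1} dx dy equals 6 π⁴ ζ(3), where ζ(3) = Σ_{k=1}^∞ k^{−3}. (Equivalently, the period of the completed primitive graph P₃, the complete graph K₅, equals 6ζ(3).) -/
/-!
The integrand is nonnegative, so Tonelli's theorem applies throughout. Write `x` and `y` in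
logarithmic polar coordinates about the axis `ℝ e`, with `‖x‖ = exp u`, `‖y‖ = exp v` and polar
angles `θ, φ ∈ (0, π)`. Averaging `‖x - y‖⁻²` over the rotations fixing `e` turns it into the
Green function of the upper half-plane at the points `exp (u + iθ)` and `exp (v + iφ)`, while
`‖e - x‖⁻²` and `‖e - y‖⁻²`, multiplied by the Jacobians, become conjugate Poisson kernels. These
three kernels are sine series with coefficients `exp (-n |u - v|) / n`, `exp (-n |u|)` and
`exp (-n |v|)`, up to constants, so orthogonality of the sines reduces the angular integrals to
`π² ∑ exp (-n (|u| + |v| + |u - v|)) / n`. The integral of the `n`-th exponential over `u` and `v`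
is `3 / (2 n²)`, and the total is `4 π² · π² ∑ 3 / (2 n³) = 6 π⁴ ζ(3)`.
-/

open Real MeasureTheory Set Metric
open scoped ENNReal RealInnerProductSpace

section TrigonometricSeries

variable {t : ℝ}

lemma normSq_one_sub_ofReal_mul_exp (t θ : ℝ) :
    Complex.normSq (1 - t * Complex.exp (θ * Complex.I)) = 1 - 2 * t * cos θ + t ^ 2 := by
  rw [Complex.normSq_apply]
  simp only [Complex.sub_re, Complex.one_re, Complex.re_ofReal_mul, Complex.sub_im, Complex.one_im,
    Complex.im_ofReal_mul, Complex.exp_ofReal_mul_I_re, Complex.exp_ofReal_mul_I_im]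
  linear_combination t ^ 2 * sin_sq_add_cos_sq θ

lemma ofReal_mul_exp_pow (t θ : ℝ) (n : ℕ) :
    (t * Complex.exp (θ * Complex.I)) ^ n =
      (t ^ n : ℝ) * Complex.exp ((n * θ : ℝ) * Complex.I) := by
  rw [mul_pow, ← Complex.exp_nat_mul]
  push_cast
  ring_nf

lemma norm_ofReal_mul_exp_lt_one (ht : |t| < 1) (θ : ℝ) :
    ‖t * Complex.exp (θ * Complex.I)‖ < 1 := by
  simpa [Complex.norm_exp_ofReal_mul_I] using ht

lemma hasSum_pow_mul_sin (ht : |t| < 1) (θ : ℝ) :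
    HasSum (fun n : ℕ+ => t ^ (n : ℕ) * sin (n * θ)) (t * sin θ / (1 - 2 * t * cos θ + t ^ 2)) := by
  have geometric := Complex.hasSum_im
    (hasSum_geometric_of_norm_lt_one (norm_ofReal_mul_exp_lt_one ht θ))
  simp only [ofReal_mul_exp_pow, Complex.im_ofReal_mul, Complex.exp_ofReal_mul_I_im, Complex.inv_im,
    normSq_one_sub_ofReal_mul_exp, Complex.sub_im, Complex.one_im, zero_sub, neg_neg] at geometric
  refine (hasSum_pnat_iff (f := fun n : ℕ => t ^ n * sin (n * θ))).2 ?_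
  simpa using geometric

lemma hasSum_pow_div_mul_cos (ht : |t| < 1) (α : ℝ) :
    HasSum (fun n : ℕ+ => t ^ (n : ℕ) / n * cos (n * α))
      (-(log (1 - 2 * t * cos α + t ^ 2) / 2)) := by
  have taylor := Complex.hasSum_re
    (Complex.hasSum_taylorSeries_neg_log (norm_ofReal_mul_exp_lt_one ht α))
  simp only [ofReal_mul_exp_pow, Complex.div_natCast_re, Complex.re_ofReal_mul,
    Complex.exp_ofReal_mul_I_re, Complex.neg_re, Complex.log_re] at taylor
  refine (hasSum_pnat_iff (f := fun n : ℕ => t ^ n / n * cos (n * α))).2 ?_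
  rw [← normSq_one_sub_ofReal_mul_exp, Complex.normSq_eq_norm_sq, log_pow]
  simpa [div_mul_eq_mul_div] using taylor

end TrigonometricSeries

section SineSeries

/-- The sine series `∑_{n ≥ 1} aₙ sin nθ`, the form in which the angular kernels are integrated
against each other. Its value is `0` at angles where the series is not summable. -/
noncomputable def sineSeries (a : ℕ+ → ℝ) (θ : ℝ) : ℝ := ∑' n : ℕ+, a n * sin (n * θ)

variable {a b : ℕ+ → ℝ}

lemma norm_mul_sin_le (c x : ℝ) : ‖c * sin x‖ ≤ |c| := by
  rw [norm_mul]
  exact mul_le_of_le_one_right (abs_nonneg c) (abs_sin_le_one x)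

lemma summable_mul_sin (ha : Summable a) (x : ℕ+ → ℝ) : Summable fun n => a n * sin (x n) :=
  .of_norm_bounded ha.abs fun n => norm_mul_sin_le (a n) (x n)

lemma continuous_sineSeries (ha : Summable a) : Continuous (sineSeries a) :=
  continuous_tsum (fun n => by fun_prop) ha.abs fun n θ => norm_mul_sin_le (a n) (n * θ)

lemma integral_cos_int_mul {m : ℤ} (hm : m ≠ 0) : ∫ θ in (0 : ℝ)..π, cos (m * θ) = 0 := by
  rw [intervalIntegral.integral_comp_mul_left _ (Int.cast_ne_zero.2 hm), integral_cos]
  simp [sin_int_mul_pi]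

lemma integral_sin_mul_sin (n k : ℕ+) :
    ∫ θ in (0 : ℝ)..π, sin (n * θ) * sin (k * θ) = if n = k then π / 2 else 0 := by
  have product_to_sum (θ : ℝ) : sin (n * θ) * sin (k * θ) =
      (cos (((n - k : ℤ) : ℝ) * θ) - cos (((n + k : ℤ) : ℝ) * θ)) / 2 := by
    push_cast
    rw [sub_mul, add_mul, cos_sub, cos_add]
    ring
  have interval_integrable (m : ℤ) : IntervalIntegrable (fun θ => cos (m * θ)) volume 0 π :=
    Continuous.intervalIntegrable (by fun_prop) _ _
  simp_rw [product_to_sum]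
  rw [intervalIntegral.integral_div,
    intervalIntegral.integral_sub (interval_integrable _) (interval_integrable _),
    integral_cos_int_mul (m := n + k) (by positivity)]
  split_ifs with h
  · simp [h]
  · rw [integral_cos_int_mul (sub_ne_zero.2 (by exact_mod_cast h))]
    simp

lemma hasSum_integral_mul_sineSeries {g : ℝ → ℝ} (hg : Continuous g) (ha : Summable a) :
    HasSum (fun n : ℕ+ => a n * ∫ θ in (0 : ℝ)..π, g θ * sin (n * θ))
      (∫ θ in (0 : ℝ)..π, g θ * sineSeries a θ) := by
  have termwise := intervalIntegral.hasSum_integral_of_dominated_convergence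
    (μ := volume) (a := 0) (b := π) (F := fun (n : ℕ+) θ => g θ * (a n * sin (n * θ)))
    (f := fun θ => g θ * sineSeries a θ) (fun n θ => ‖g θ‖ * |a n|)
    (fun n => Continuous.aestronglyMeasurable (by fun_prop))
    (fun n => .of_forall fun θ _ => by
      rw [norm_mul]
      gcongr
      exact norm_mul_sin_le _ _)
    (.of_forall fun θ _ => ha.abs.mul_left _)
    (by
      simp_rw [tsum_mul_left]
      exact (hg.norm.mul_const _).intervalIntegrable _ _)
    (.of_forall fun θ _ => (summable_mul_sin ha fun n => n * θ).hasSum.mul_left _)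
  refine termwise.congr_fun fun n => ?_
  rw [← intervalIntegral.integral_const_mul]
  simp_rw [mul_left_comm]

lemma integral_sineSeries_mul_sin (ha : Summable a) (k : ℕ+) :
    ∫ θ in (0 : ℝ)..π, sineSeries a θ * sin (k * θ) = π / 2 * a k := by
  have termwise := hasSum_integral_mul_sineSeries (g := fun θ => sin (k * θ)) (by fun_prop) ha
  simp_rw [mul_comm (sineSeries a _), ← termwise.tsum_eq, integral_sin_mul_sin]
  simp [mul_comm]

theorem integral_sineSeries_mul_sineSeries (ha : Summable a) (hb : Summable b) :
    ∫ θ in (0 : ℝ)..π, sineSeries a θ * sineSeries b θ = π / 2 * ∑' n, a n * b n := by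
  rw [← (hasSum_integral_mul_sineSeries (continuous_sineSeries ha) hb).tsum_eq, ← tsum_mul_left]
  simp_rw [integral_sineSeries_mul_sin ha]
  congr! 2 with n
  ring

end SineSeries

section Kernels

variable {u v w θ φ : ℝ}

/-- The conjugate Poisson kernel `Im (z / (1 - z))` at `z = exp (-|u| + iθ)`, for `u ≠ 0`:
the contribution of `‖e - x‖⁻²` in logarithmic polar coordinates `‖x‖ = exp u`, `∠ e x = θ`. -/
noncomputable def conjPoissonKernel (u θ : ℝ) : ℝ := sin θ / (2 * (cosh u - cos θ))

/-- The kernel `log (|z - conj z'|² / |z - z'|²)` at `z = exp (u + iθ)`, `z' = exp (v + iφ)`, where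
`w = u - v`: up to normalization, the Green function of the upper half-plane. It is what remains of
`‖x - y‖⁻²` after averaging over rotations about the axis. -/
noncomputable def greenKernel (w θ φ : ℝ) : ℝ :=
  log ((cosh w - cos (θ + φ)) / (cosh w - cos (θ - φ)))

lemma cosh_sub_cos_pos (hu : u ≠ 0) (θ : ℝ) : 0 < cosh u - cos θ := by
  linarith [one_lt_cosh.2 hu, cos_le_one θ]

lemma one_sub_two_mul_exp_neg_abs_mul_cos (u θ : ℝ) :
    1 - 2 * exp (-|u|) * cos θ + exp (-|u|) ^ 2 = 2 * exp (-|u|) * (cosh u - cos θ) := by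
  have exp_neg_mul_exp : exp (-|u|) * exp |u| = 1 := by rw [← exp_add, neg_add_cancel, exp_zero]
  rw [← cosh_abs, cosh_eq]
  linear_combination -exp_neg_mul_exp

lemma abs_exp_neg_abs_lt_one (hu : u ≠ 0) : |exp (-|u|)| < 1 := by simpa using hu

lemma summable_exp_neg_abs_pow (hu : u ≠ 0) : Summable fun n : ℕ+ => exp (-|u|) ^ (n : ℕ) :=
  summable_pnat_iff_summable_nat.2 (summable_geometric_of_abs_lt_one (abs_exp_neg_abs_lt_one hu))

lemma summable_exp_neg_abs_pow_div (hu : u ≠ 0) :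
    Summable fun n : ℕ+ => exp (-|u|) ^ (n : ℕ) / n :=
  (summable_exp_neg_abs_pow hu).of_nonneg_of_le (fun n => by positivity) fun n =>
    div_le_self (by positivity) (by exact_mod_cast one_le)

lemma conjPoissonKernel_eq_sineSeries (hu : u ≠ 0) :
    conjPoissonKernel u = sineSeries fun n => exp (-|u|) ^ (n : ℕ) := by
  ext θ
  have denominator_pos := cosh_sub_cos_pos hu θ
  rw [sineSeries, (hasSum_pow_mul_sin (abs_exp_neg_abs_lt_one hu) θ).tsum_eq,
    one_sub_two_mul_exp_neg_abs_mul_cos, conjPoissonKernel]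
  field_simp

lemma greenKernel_eq_sineSeries (hw : w ≠ 0) (θ : ℝ) :
    greenKernel w θ = sineSeries fun n => 4 * (exp (-|w|) ^ (n : ℕ) / n * sin (n * θ)) := by
  ext φ
  have cos_series (α : ℝ) := hasSum_pow_div_mul_cos (abs_exp_neg_abs_lt_one hw) α
  have difference := ((cos_series (θ - φ)).sub (cos_series (θ + φ))).mul_left 2
  have log_factor (α : ℝ) : log (1 - 2 * exp (-|w|) * cos α + exp (-|w|) ^ 2) =
      log (2 * exp (-|w|)) + log (cosh w - cos α) := by
    rw [one_sub_two_mul_exp_neg_abs_mul_cos,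
      log_mul (by positivity) (cosh_sub_cos_pos hw α).ne']
  have log_sub_log : log (cosh w - cos (θ + φ)) - log (cosh w - cos (θ - φ)) =
      ∑' n : ℕ+, 2 * (exp (-|w|) ^ (n : ℕ) / n * cos (n * (θ - φ)) -
        exp (-|w|) ^ (n : ℕ) / n * cos (n * (θ + φ))) := by
    rw [difference.tsum_eq, log_factor, log_factor]
    ring
  rw [greenKernel, log_div (cosh_sub_cos_pos hw _).ne' (cosh_sub_cos_pos hw _).ne', log_sub_log,
    sineSeries]
  congr! 2 with n
  rw [mul_sub (n : ℝ), mul_add (n : ℝ), cos_sub, cos_add]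
  ring

lemma continuous_conjPoissonKernel (hu : u ≠ 0) : Continuous (conjPoissonKernel u) :=
  conjPoissonKernel_eq_sineSeries hu ▸ continuous_sineSeries (summable_exp_neg_abs_pow hu)

lemma continuous_greenKernel (hw : w ≠ 0) (θ : ℝ) : Continuous (greenKernel w θ) :=
  greenKernel_eq_sineSeries hw θ ▸ continuous_sineSeries
    ((summable_mul_sin (summable_exp_neg_abs_pow_div hw) _).mul_left 4)

lemma conjPoissonKernel_nonneg (u : ℝ) (hθ : θ ∈ Ioo 0 π) : 0 ≤ conjPoissonKernel u θ :=
  div_nonneg (sin_pos_of_mem_Ioo hθ).le (by linarith [one_le_cosh u, cos_le_one θ])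

lemma greenKernel_nonneg (hw : w ≠ 0) (hθ : θ ∈ Ioo 0 π) (hφ : φ ∈ Ioo 0 π) :
    0 ≤ greenKernel w θ φ := by
  apply log_nonneg
  rw [one_le_div (cosh_sub_cos_pos hw _), cos_add, cos_sub]
  linarith [mul_pos (sin_pos_of_mem_Ioo hθ) (sin_pos_of_mem_Ioo hφ)]

lemma integral_conjPoissonKernel_mul_greenKernel (hv : v ≠ 0) (hw : w ≠ 0) (θ : ℝ) :
    ∫ φ in (0 : ℝ)..π, conjPoissonKernel v φ * greenKernel w θ φ =
      sineSeries (fun n => 2 * π * (exp (-|v|) ^ (n : ℕ) * (exp (-|w|) ^ (n : ℕ) / n))) θ := by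
  rw [conjPoissonKernel_eq_sineSeries hv, greenKernel_eq_sineSeries hw,
    integral_sineSeries_mul_sineSeries (summable_exp_neg_abs_pow hv)
      ((summable_mul_sin (summable_exp_neg_abs_pow_div hw) _).mul_left 4),
    sineSeries, ← tsum_mul_left]
  congr! 2 with n
  ring

lemma summable_exp_neg_abs_pow_mul (v : ℝ) (hw : w ≠ 0) :
    Summable fun n : ℕ+ => exp (-|v|) ^ (n : ℕ) * (exp (-|w|) ^ (n : ℕ) / n) :=
  (summable_exp_neg_abs_pow_div hw).of_nonneg_of_le (fun n => by positivity) fun n =>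
    mul_le_of_le_one_left (by positivity) (pow_le_one₀ (by positivity) (by simp))

theorem integral_integral_kernels (hu : u ≠ 0) (hv : v ≠ 0) (hw : w ≠ 0) :
    ∫ θ in (0 : ℝ)..π, conjPoissonKernel u θ *
        ∫ φ in (0 : ℝ)..π, conjPoissonKernel v φ * greenKernel w θ φ =
      ∑' n : ℕ+, π ^ 2 / n * exp (-(n * (|u| + |v| + |w|))) := by
  simp_rw [integral_conjPoissonKernel_mul_greenKernel hv hw, conjPoissonKernel_eq_sineSeries hu]
  rw [integral_sineSeries_mul_sineSeries (summable_exp_neg_abs_pow hu)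
    ((summable_exp_neg_abs_pow_mul v hw).mul_left _), ← tsum_mul_left]
  congr! 2 with n
  rw [show -(n * (|u| + |v| + |w|)) = (n : ℕ) * -|u| + (n : ℕ) * -|v| + (n : ℕ) * -|w| by ring,
    exp_add, exp_add, exp_nat_mul, exp_nat_mul, exp_nat_mul]
  ring

lemma summable_sq_pi_div_mul_exp_neg_mul {s : ℝ} (hs : 0 < s) :
    Summable fun n : ℕ+ => π ^ 2 / n * exp (-(n * s)) := by
  refine ((summable_exp_neg_abs_pow_div hs.ne').mul_left (π ^ 2)).congr fun n => ?_
  rw [abs_of_pos hs, ← exp_nat_mul, mul_neg]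
  ring

lemma setLIntegral_Ioo_ofReal_eq_intervalIntegral {f : ℝ → ℝ} {a b : ℝ} (hab : a ≤ b)
    (hf : Continuous f) (nonneg : ∀ x ∈ Ioo a b, 0 ≤ f x) :
    ∫⁻ x in Ioo a b, ENNReal.ofReal (f x) = ENNReal.ofReal (∫ x in a..b, f x) := by
  rw [intervalIntegral.integral_of_le hab, integral_Ioc_eq_integral_Ioo,
    ofReal_integral_eq_lintegral_ofReal
      (hf.integrableOn_Icc.mono_set Ioo_subset_Icc_self)
      ((ae_restrict_iff' measurableSet_Ioo).2 (.of_forall nonneg))]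

theorem lintegral_lintegral_kernels (hu : u ≠ 0) (hv : v ≠ 0) (hw : w ≠ 0) :
    ∫⁻ θ in Ioo 0 π, ∫⁻ φ in Ioo 0 π, ENNReal.ofReal
        (conjPoissonKernel u θ * (conjPoissonKernel v φ * greenKernel w θ φ)) =
      ∑' n : ℕ+, ENNReal.ofReal (π ^ 2 / n * exp (-(n * (|u| + |v| + |w|)))) := by
  have kernels_nonneg {θ φ : ℝ} (hθ : θ ∈ Ioo 0 π) (hφ : φ ∈ Ioo 0 π) :
      0 ≤ conjPoissonKernel v φ * greenKernel w θ φ :=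
    mul_nonneg (conjPoissonKernel_nonneg v hφ) (greenKernel_nonneg hw hθ hφ)
  have inner (θ : ℝ) (hθ : θ ∈ Ioo 0 π) :
      ∫⁻ φ in Ioo 0 π, ENNReal.ofReal
          (conjPoissonKernel u θ * (conjPoissonKernel v φ * greenKernel w θ φ)) =
        ENNReal.ofReal (conjPoissonKernel u θ *
          ∫ φ in (0 : ℝ)..π, conjPoissonKernel v φ * greenKernel w θ φ) := by
    rw [setLIntegral_Ioo_ofReal_eq_intervalIntegral pi_nonneg
      (.fun_mul (by fun_prop)
        ((continuous_conjPoissonKernel hv).fun_mul (continuous_greenKernel hw θ)))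
      fun φ hφ => mul_nonneg (conjPoissonKernel_nonneg u hθ) (kernels_nonneg hθ hφ),
      intervalIntegral.integral_const_mul]
  have inner_continuous : Continuous fun θ =>
      ∫ φ in (0 : ℝ)..π, conjPoissonKernel v φ * greenKernel w θ φ := by
    simp_rw [integral_conjPoissonKernel_mul_greenKernel hv hw]
    exact continuous_sineSeries ((summable_exp_neg_abs_pow_mul v hw).mul_left _)
  rw [setLIntegral_congr_fun measurableSet_Ioo inner,
    setLIntegral_Ioo_ofReal_eq_intervalIntegral pi_nonneg
      ((continuous_conjPoissonKernel hu).fun_mul inner_continuous)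
      fun θ hθ => mul_nonneg (conjPoissonKernel_nonneg u hθ) ?_,
    integral_integral_kernels hu hv hw,
    ENNReal.ofReal_tsum_of_nonneg (fun n => by positivity)
      (summable_sq_pi_div_mul_exp_neg_mul (by positivity))]
  rw [intervalIntegral.integral_of_le pi_nonneg, integral_Ioc_eq_integral_Ioo]
  exact setIntegral_nonneg measurableSet_Ioo fun φ hφ => kernels_nonneg hθ hφ

end Kernels

section RadialIntegral

variable {c : ℝ}

lemma abs_add_abs_sub_eq_max (u v : ℝ) : |v| + |u - v| = max |u| |2 * v - u| := by
  grind

lemma lintegral_ofReal_eq_ofReal_of_integral_eq {X : Type*} [MeasurableSpace X] {μ : Measure X}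
    {f : X → ℝ} {I : ℝ} (nonneg : 0 ≤ f) (hI : I ≠ 0) (h : ∫ x, f x ∂μ = I) :
    ∫⁻ x, ENNReal.ofReal (f x) ∂μ = ENNReal.ofReal I := by
  rw [← h, ofReal_integral_eq_lintegral_ofReal (.of_integral_ne_zero (h ▸ hI)) (.of_forall nonneg)]

lemma integral_Ioi_exp_neg_mul_max (hc : 0 < c) {s : ℝ} (hs : 0 ≤ s) :
    ∫ t in Ioi 0, exp (-(c * max s t)) = exp (-(c * s)) * (1 / c + s) := by
  have const_on_Ioc : EqOn (fun t => exp (-(c * max s t))) (fun _ => exp (-(c * s))) (Ioc 0 s) :=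
    fun t ht => by simp only [max_eq_left ht.2]
  have exp_on_Ioi : EqOn (fun t => exp (-(c * max s t))) (fun t => exp (-c * t)) (Ioi s) :=
    fun t ht => by simp only [max_eq_right (mem_Ioi.1 ht).le, neg_mul]
  rw [← Ioc_union_Ioi_eq_Ioi hs, setIntegral_union (Ioc_disjoint_Ioi le_rfl) measurableSet_Ioi
      ((integrableOn_congr_fun const_on_Ioc measurableSet_Ioc).2 (by simp))
      ((integrableOn_congr_fun exp_on_Ioi measurableSet_Ioi).2
        (integrableOn_exp_mul_Ioi (neg_lt_zero.2 hc) s)),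
    setIntegral_congr_fun measurableSet_Ioc const_on_Ioc,
    setIntegral_congr_fun measurableSet_Ioi exp_on_Ioi, integral_exp_mul_Ioi (neg_lt_zero.2 hc),
    setIntegral_const, volume_real_Ioc_of_le hs, smul_eq_mul]
  field_simp
  ring

lemma integral_exp_neg_mul_abs_add_abs_sub (hc : 0 < c) (u : ℝ) :
    ∫ v, exp (-(c * (|v| + |u - v|))) = exp (-(c * |u|)) * (1 / c + |u|) := by
  simp_rw [abs_add_abs_sub_eq_max]
  rw [Measure.integral_comp_mul_left (fun t => exp (-(c * max |u| |t - u|))) 2,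
    integral_sub_right_eq_self (fun t => exp (-(c * max |u| |t|))),
    integral_comp_abs (f := fun t => exp (-(c * max |u| t))),
    integral_Ioi_exp_neg_mul_max hc (abs_nonneg u)]
  simp

lemma integral_Ioi_exp_neg_two_mul_mul_add (hc : 0 < c) :
    ∫ u in Ioi 0, exp (-(2 * c * u)) * (1 / c + u) = 3 / (4 * c ^ 2) := by
  have hasDerivAt_primitive (u : ℝ) : HasDerivAt
      (fun u => exp (-(2 * c * u)) * -(3 / (4 * c ^ 2) + u / (2 * c)))
      (exp (-(2 * c * u)) * (1 / c + u)) u := by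
    have linear := (((hasDerivAt_id' u).div_const (2 * c)).const_add (3 / (4 * c ^ 2))).fun_neg
    refine ((((hasDerivAt_id' u).const_mul (2 * c)).fun_neg.exp).fun_mul linear).congr_deriv ?_
    field_simp
    ring
  have primitive_tendsto : Filter.Tendsto
      (fun u => exp (-(2 * c * u)) * -(3 / (4 * c ^ 2) + u / (2 * c))) Filter.atTop (nhds 0) := by
    have scaled : Filter.Tendsto (fun u => 2 * c * u) Filter.atTop Filter.atTop :=
      Filter.tendsto_id.const_mul_atTop (by positivity)
    have decay (k : ℕ) := (tendsto_pow_mul_exp_neg_atTop_nhds_zero k).comp scaled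
    convert! ((decay 0).const_mul (-(3 / (4 * c ^ 2)))).add
      ((decay 1).const_mul (-(1 / (4 * c ^ 2)))) using 1
    · ext u
      simp only [Function.comp_apply]
      field_simp
      ring
    · simp
  rw [integral_Ioi_of_hasDerivAt_of_nonneg' (fun u _ => hasDerivAt_primitive u)
    (fun u (hu : 0 < u) => by positivity) primitive_tendsto]
  simp

theorem lintegral_lintegral_exp_neg_mul_abs_add_abs_add_abs_sub (hc : 0 < c) :
    ∫⁻ u : ℝ, ∫⁻ v : ℝ, ENNReal.ofReal (exp (-(c * (|u| + |v| + |u - v|)))) =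
      ENNReal.ofReal (3 / (2 * c ^ 2)) := by
  have inner (u : ℝ) : ∫⁻ v : ℝ, ENNReal.ofReal (exp (-(c * (|u| + |v| + |u - v|)))) =
      ENNReal.ofReal (exp (-(2 * c * |u|)) * (1 / c + |u|)) := by
    refine lintegral_ofReal_eq_ofReal_of_integral_eq (fun v => (exp_pos _).le) (by positivity) ?_
    calc ∫ v, exp (-(c * (|u| + |v| + |u - v|)))
        = ∫ v, exp (-(c * |u|)) * exp (-(c * (|v| + |u - v|))) := by
          simp_rw [← exp_add]
          ring_nf
      _ = exp (-(2 * c * |u|)) * (1 / c + |u|) := by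
          rw [integral_const_mul, integral_exp_neg_mul_abs_add_abs_sub hc, ← mul_assoc, ← exp_add]
          ring_nf
  simp_rw [inner]
  refine lintegral_ofReal_eq_ofReal_of_integral_eq (fun u => by positivity) (by positivity) ?_
  rw [integral_comp_abs (f := fun u => exp (-(2 * c * u)) * (1 / c + u)),
    integral_Ioi_exp_neg_two_mul_mul_add hc]
  ring

end RadialIntegral

section PlaneCoordinates

lemma lintegral_Ioi_zero_eq_lintegral_exp (f : ℝ → ℝ≥0∞) :
    ∫⁻ r in Ioi 0, f r = ∫⁻ u, ENNReal.ofReal (exp u) * f (exp u) := by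
  have change_of_variables := lintegral_image_eq_lintegral_abs_deriv_mul (s := univ) (f := exp)
    (f' := exp) .univ (fun x _ => (hasDerivAt_exp x).hasDerivWithinAt) exp_injective.injOn f
  simpa [range_exp] using change_of_variables

lemma mul_sin_pos_iff {r θ : ℝ} (hr : 0 < r) (hθ : θ ∈ Ioo (-π) π) :
    0 < r * sin θ ↔ θ ∈ Ioo 0 π := by
  rw [mul_pos_iff_of_pos_left hr]
  refine ⟨fun h => ⟨not_le.1 fun hθ0 => ?_, hθ.2⟩, sin_pos_of_mem_Ioo⟩
  exact h.not_ge (sin_nonpos_of_nonpos_of_neg_pi_le hθ0 hθ.1.le)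

theorem lintegral_upperHalfPlane_eq_polar {f : ℝ × ℝ → ℝ≥0∞} (hf : Measurable f) :
    ∫⁻ a, ∫⁻ b in Ioi 0, f (a, b) =
      ∫⁻ r in Ioi 0, ∫⁻ θ in Ioo 0 π, ENNReal.ofReal r * f (r * cos θ, r * sin θ) := by
  have measurable_upperHalfPlane : MeasurableSet ((univ : Set ℝ) ×ˢ Ioi (0 : ℝ)) :=
    .prod .univ measurableSet_Ioi
  have measurable_target : MeasurableSet (Ioi (0 : ℝ) ×ˢ Ioo (0 : ℝ) π) :=
    measurableSet_Ioi.prod measurableSet_Ioo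
  have polar := lintegral_comp_polarCoord_symm ((univ ×ˢ Ioi 0).indicator f)
  have restrict_angle : EqOn
      (fun p => ENNReal.ofReal p.1 • (univ ×ˢ Ioi 0).indicator f (polarCoord.symm p))
      ((Ioi 0 ×ˢ Ioo 0 π).indicator
        fun p => ENNReal.ofReal p.1 * f (p.1 * cos p.2, p.1 * sin p.2)) polarCoord.target := by
    rintro ⟨r, θ⟩ ⟨hr, hθ⟩
    have := mul_sin_pos_iff hr hθ
    simp only [indicator, polarCoord_symm_apply, mem_prod, mem_univ, true_and, smul_eq_mul,
      mul_ite, mul_zero]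
    grind
  have target_inter : Ioi (0 : ℝ) ×ˢ Ioo (0 : ℝ) π ∩ polarCoord.target = Ioi 0 ×ˢ Ioo 0 π := by
    rw [inter_eq_left, polarCoord_target]
    gcongr
    exact neg_nonpos.2 pi_nonneg
  rw [setLIntegral_congr_fun polarCoord.open_target.measurableSet restrict_angle,
    setLIntegral_indicator measurable_target, target_inter,
    lintegral_indicator measurable_upperHalfPlane, Measure.volume_eq_prod,
    setLIntegral_prod _ hf.aemeasurable, setLIntegral_prod _ (by fun_prop)] at polar
  simpa using polar.symm

end PlaneCoordinates

section RadialCoordinates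

variable {V : Type*} [MeasurableSpace V]

lemma lintegral_fun_norm_addHaar [NormedAddCommGroup V] [NormedSpace ℝ V] [FiniteDimensional ℝ V]
    [BorelSpace V] [Nontrivial V] (μ : Measure V) [μ.IsAddHaarMeasure] {f : ℝ → ℝ≥0∞}
    (hf : Measurable f) :
    ∫⁻ x, f ‖x‖ ∂μ = Module.finrank ℝ V * μ (ball 0 1) *
      ∫⁻ r in Ioi 0, ENNReal.ofReal (r ^ (Module.finrank ℝ V - 1)) * f r :=
  calc
    ∫⁻ x, f ‖x‖ ∂μ = ∫⁻ x : ({0}ᶜ : Set V), f ‖x.1‖ ∂(μ.comap (↑)) := by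
      rw [lintegral_subtype_comap (measurableSet_singleton _).compl fun x => f ‖x‖,
        restrict_compl_singleton]
    _ = ∫⁻ p, f p.2 ∂(μ.toSphere.prod (.volumeIoiPow (Module.finrank ℝ V - 1))) := by
      simpa using μ.measurePreserving_homeomorphUnitSphereProd.lintegral_comp
        (f := fun p => f p.2) (by fun_prop)
    _ = μ.toSphere univ * ∫⁻ r : Ioi (0 : ℝ), f r ∂(.volumeIoiPow (Module.finrank ℝ V - 1)) := by
      rw [lintegral_prod _ (by fun_prop)]
      simp only [lintegral_const, mul_comm]
    _ = _ := by
      rw [μ.toSphere_apply_univ, Measure.volumeIoiPow,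
        lintegral_withDensity_eq_lintegral_mul _ (by fun_prop) (by fun_prop),
        ← lintegral_subtype_comap measurableSet_Ioi]
      rfl

/-- The area `n ω_n` of the unit sphere in `n`-dimensional Euclidean space, where `ω_n` is the
volume of the unit ball. -/
noncomputable def unitSphereArea (n : ℕ) : ℝ := n * (√π ^ n / Gamma (n / 2 + 1))

lemma unitSphereArea_two : unitSphereArea 2 = 2 * π := by
  simp [unitSphereArea, sq_sqrt pi_nonneg, one_add_one_eq_two]

lemma unitSphereArea_three : unitSphereArea 3 = 4 * π := by
  have gamma_five_halves : Gamma (3 / 2 + 1) = 3 / 4 * √π := by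
    rw [Gamma_add_one (by norm_num), show (3 / 2 : ℝ) = 1 / 2 + 1 by norm_num,
      Gamma_add_one (by norm_num), Gamma_one_half_eq]
    ring
  have sqrt_pi_sq := sq_sqrt pi_nonneg
  rw [unitSphereArea, Nat.cast_ofNat, gamma_five_halves]
  field_simp
  linear_combination sqrt_pi_sq

variable [NormedAddCommGroup V] [InnerProductSpace ℝ V] [FiniteDimensional ℝ V] [BorelSpace V]

lemma lintegral_fun_norm {n : ℕ} (hn : Module.finrank ℝ V = n + 1) {f : ℝ → ℝ≥0∞}
    (hf : Measurable f) :
    ∫⁻ x : V, f ‖x‖ =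
      ENNReal.ofReal (unitSphereArea (n + 1)) * ∫⁻ r in Ioi 0, ENNReal.ofReal (r ^ n) * f r := by
  have : Nontrivial V := Module.nontrivial_of_finrank_pos (R := ℝ) (by omega)
  rw [lintegral_fun_norm_addHaar volume hf, InnerProductSpace.volume_ball, hn, unitSphereArea,
    ENNReal.ofReal_mul (by positivity), ENNReal.ofReal_natCast]
  simp

end RadialCoordinates

section AxialCoordinates

variable {V : Type*} [NormedAddCommGroup V] [InnerProductSpace ℝ V] {e f : V} {n : ℕ}

lemma norm_smul_add_orthogonal (he : ‖e‖ = 1) (a : ℝ) (w : (ℝ ∙ e)ᗮ) :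
    ‖a • e + w‖ = √(a ^ 2 + ‖w‖ ^ 2) := by
  have orthogonal : ⟪a • e, (w : V)⟫ = 0 := by
    rw [inner_smul_left, Submodule.mem_orthogonal_singleton_iff_inner_right.1 w.2, mul_zero]
  rw [← sqrt_sq (norm_nonneg _), norm_add_sq_real, orthogonal, norm_smul, he]
  simp

lemma inner_smul_add_orthogonal (he : ‖e‖ = 1) (a : ℝ) (w : (ℝ ∙ e)ᗮ) :
    ⟪e, a • e + w⟫ = a := by
  rw [inner_add_right, inner_smul_right, Submodule.mem_orthogonal_singleton_iff_inner_right.1 w.2,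
    real_inner_self_eq_norm_sq, he]
  simp

lemma sqrt_mul_cos_sq_add_mul_sin_sq {r : ℝ} (hr : 0 ≤ r) (θ : ℝ) :
    √((r * cos θ) ^ 2 + (r * sin θ) ^ 2) = r := by
  rw [sqrt_eq_iff_mul_self_eq (by positivity) hr]
  linear_combination r ^ 2 * sin_sq_add_cos_sq θ

lemma finrank_orthogonal_span_singleton_of_norm_eq_one (hn : Module.finrank ℝ V = n + 1)
    (he : ‖e‖ = 1) : Module.finrank ℝ (ℝ ∙ e)ᗮ = n :=
  have : Fact (Module.finrank ℝ V = n + 1) := ⟨hn⟩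
  Submodule.finrank_orthogonal_span_singleton (norm_ne_zero_iff.1 (he ▸ one_ne_zero))

variable [FiniteDimensional ℝ V] [MeasurableSpace V] [BorelSpace V]

theorem lintegral_eq_lintegral_smul_add_orthogonal (he : ‖e‖ = 1) {g : V → ℝ≥0∞}
    (hg : Measurable g) :
    ∫⁻ x, g x = ∫⁻ a : ℝ, ∫⁻ w : (ℝ ∙ e)ᗮ, g (a • e + w) := by
  have split := (ℝ ∙ e).orthogonalDecomposition.symm.measurePreserving.comp
    (WithLp.volume_preserving_toLp (ℝ ∙ e) (ℝ ∙ e)ᗮ)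
  have axis := (LinearIsometryEquiv.toSpanUnitSingleton e he :
    ℝ ≃ₗᵢ[ℝ] ℝ ∙ e).measurePreserving
  rw [← split.lintegral_comp hg, Measure.volume_eq_prod, lintegral_prod _ (by fun_prop),
    ← axis.lintegral_comp (by fun_prop)]
  simp

theorem lintegral_fun_inner_norm (hn : Module.finrank ℝ V = n + 2) (he : ‖e‖ = 1)
    {F : ℝ × ℝ → ℝ≥0∞} (hF : Measurable F) :
    ∫⁻ x : V, F (⟪e, x⟫, ‖x‖) = ENNReal.ofReal (unitSphereArea (n + 1)) *
      ∫⁻ r in Ioi 0, ∫⁻ θ in Ioo 0 π,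
        ENNReal.ofReal (r * (r * sin θ) ^ n) * F (r * cos θ, r) := by
  have finrank_orthogonal := finrank_orthogonal_span_singleton_of_norm_eq_one hn he
  rw [lintegral_eq_lintegral_smul_add_orthogonal he (by fun_prop)]
  simp_rw [inner_smul_add_orthogonal he, norm_smul_add_orthogonal he]
  simp_rw [fun a => lintegral_fun_norm finrank_orthogonal (f := fun b => F (a, √(a ^ 2 + b ^ 2)))
    (by fun_prop)]
  rw [lintegral_const_mul' _ _ ENNReal.ofReal_ne_top, lintegral_upperHalfPlane_eq_polar
    (f := fun p => ENNReal.ofReal (p.2 ^ n) * F (p.1, √(p.1 ^ 2 + p.2 ^ 2))) (by fun_prop)]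
  congr 1
  refine setLIntegral_congr_fun measurableSet_Ioi fun r (hr : 0 < r) => ?_
  simp_rw [sqrt_mul_cos_sq_add_mul_sin_sq hr.le, ENNReal.ofReal_mul hr.le, mul_assoc]

theorem lintegral_fun_inner_inner_norm (hn : Module.finrank ℝ V = n + 3) (he : ‖e‖ = 1)
    (hf : ‖f‖ = 1) (hef : ⟪e, f⟫ = 0) {F : ℝ × ℝ × ℝ → ℝ≥0∞} (hF : Measurable F) :
    ∫⁻ y : V, F (⟪e, y⟫, ⟪f, y⟫, ‖y‖) = ENNReal.ofReal (unitSphereArea (n + 1)) *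
      ∫⁻ r in Ioi 0, ∫⁻ φ in Ioo 0 π, ∫⁻ α in Ioo 0 π,
        ENNReal.ofReal (r * (r * sin φ * (r * sin φ * sin α) ^ n)) *
          F (r * cos φ, r * sin φ * cos α, r) := by
  have finrank_orthogonal := finrank_orthogonal_span_singleton_of_norm_eq_one hn he
  lift f to (ℝ ∙ e)ᗮ using Submodule.mem_orthogonal_singleton_iff_inner_right.2 hef
  have inner_f (a : ℝ) (w : (ℝ ∙ e)ᗮ) : ⟪(f : V), a • e + w⟫ = ⟪f, w⟫ := by
    rw [inner_add_right, inner_smul_right, real_inner_comm, hef, mul_zero, zero_add]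
    rfl
  rw [lintegral_eq_lintegral_smul_add_orthogonal he (by fun_prop)]
  simp_rw [inner_smul_add_orthogonal he, norm_smul_add_orthogonal he, inner_f]
  simp_rw [fun a => lintegral_fun_inner_norm finrank_orthogonal hf
    (F := fun p => F (a, p.1, √(a ^ 2 + p.2 ^ 2))) (by fun_prop)]
  rw [lintegral_const_mul' _ _ ENNReal.ofReal_ne_top, lintegral_upperHalfPlane_eq_polar
    (f := fun p => ∫⁻ α in Ioo 0 π, ENNReal.ofReal (p.2 * (p.2 * sin α) ^ n) *
      F (p.1, p.2 * cos α, √(p.1 ^ 2 + p.2 ^ 2))) (.lintegral_prod_right (by fun_prop))]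
  congr 1
  refine setLIntegral_congr_fun measurableSet_Ioi fun r (hr : 0 < r) => ?_
  simp_rw [sqrt_mul_cos_sq_add_mul_sin_sq hr.le,
    ← lintegral_const_mul' _ _ ENNReal.ofReal_ne_top, ENNReal.ofReal_mul hr.le, mul_assoc]

end AxialCoordinates

section InnerIntegral

variable {u v w θ φ : ℝ}

lemma integral_sin_div_sub_mul_cos {p q : ℝ} (hq : 0 < q) (hpq : q < p) :
    ∫ α in (0 : ℝ)..π, sin α / (p - q * cos α) = log ((p + q) / (p - q)) / q := by
  have denominator_pos (α : ℝ) : 0 < p - q * cos α := by nlinarith [cos_le_one α]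
  have hasDerivAt_primitive (α : ℝ) :
      HasDerivAt (fun α => log (p - q * cos α) / q) (sin α / (p - q * cos α)) α := by
    have := denominator_pos α
    have hasDerivAt_denominator := ((hasDerivAt_cos α).const_mul q).const_sub p
    refine ((hasDerivAt_denominator.log this.ne').div_const q).congr_deriv ?_
    field_simp
  have continuous_integrand : Continuous fun α => sin α / (p - q * cos α) := by
    fun_prop (disch := exact fun α => (denominator_pos α).ne')
  rw [intervalIntegral.integral_eq_sub_of_hasDerivAt (fun α _ => hasDerivAt_primitive α)
    (continuous_integrand.intervalIntegrable _ _), log_div (by linarith) (by linarith)]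
  simp only [cos_pi, cos_zero, mul_neg, mul_one, sub_neg_eq_add]
  ring

lemma lintegral_sin_div_eq_greenKernel (hw : w ≠ 0) (hθ : θ ∈ Ioo 0 π) (hφ : φ ∈ Ioo 0 π) :
    ∫⁻ α in Ioo 0 π,
        ENNReal.ofReal (sin α / (cosh w - cos θ * cos φ - sin θ * sin φ * cos α)) =
      ENNReal.ofReal (greenKernel w θ φ / (sin θ * sin φ)) := by
  have sines_pos : 0 < sin θ * sin φ := mul_pos (sin_pos_of_mem_Ioo hθ) (sin_pos_of_mem_Ioo hφ)
  have sines_lt : sin θ * sin φ < cosh w - cos θ * cos φ := by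
    linarith [cosh_sub_cos_pos hw (θ - φ), cos_sub θ φ]
  have denominator_pos (α : ℝ) : 0 < cosh w - cos θ * cos φ - sin θ * sin φ * cos α := by
    nlinarith [cos_le_one α]
  rw [setLIntegral_Ioo_ofReal_eq_intervalIntegral pi_nonneg
      (by fun_prop (disch := exact fun α => (denominator_pos α).ne'))
      (fun α hα => div_nonneg (sin_pos_of_mem_Ioo hα).le (denominator_pos α).le),
    integral_sin_div_sub_mul_cos sines_pos sines_lt, greenKernel, cos_add, cos_sub]
  ring_nf

lemma exp_sq_add_exp_sq (u v : ℝ) :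
    exp u ^ 2 + exp v ^ 2 = 2 * (exp u * exp v * cosh (u - v)) := by
  rw [cosh_eq, neg_sub, exp_sub, exp_sub]
  field_simp

lemma exp_sq_add_one (u : ℝ) : exp u ^ 2 + 1 = 2 * (exp u * cosh u) := by
  simpa using exp_sq_add_exp_sq u 0

lemma exp_mul_sin_pow_mul_inv_eq (u v θ φ α : ℝ) :
    exp v * (exp v * (exp v * sin φ * (exp v * sin φ * sin α))) *
        ((exp u ^ 2 + exp v ^ 2 - 2 * (exp u * (cos θ * (exp v * cos φ) +
            sin θ * (exp v * sin φ * cos α)))) * exp v ^ 2 *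
          (exp v ^ 2 + 1 - 2 * (exp v * cos φ)))⁻¹ =
      exp (-u) / 2 * sin φ * conjPoissonKernel v φ *
        (sin α / (cosh (u - v) - cos θ * cos φ - sin θ * sin φ * cos α)) := by
  rw [exp_sq_add_exp_sq, exp_sq_add_one, conjPoissonKernel, exp_neg,
    show 2 * (exp u * exp v * cosh (u - v)) - 2 * (exp u * (cos θ * (exp v * cos φ) +
        sin θ * (exp v * sin φ * cos α))) = 2 * exp u * exp v *
        (cosh (u - v) - cos θ * cos φ - sin θ * sin φ * cos α) by ring,
    show 2 * (exp v * cosh v) - 2 * (exp v * cos φ) = 2 * exp v * (cosh v - cos φ) by ring]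
  field_simp

/-- The potential, at the point `exp (u + iθ)` of the upper half-plane, of the density given in
logarithmic polar coordinates by the conjugate Poisson kernel. -/
noncomputable def greenPotential (u θ : ℝ) : ℝ≥0∞ :=
  ∫⁻ v, ∫⁻ φ in Ioo 0 π, ENNReal.ofReal (conjPoissonKernel v φ * greenKernel (u - v) θ φ)

lemma lintegral_azimuth_eq_greenKernel (huv : u ≠ v) (hθ : θ ∈ Ioo 0 π) (hφ : φ ∈ Ioo 0 π) :
    ∫⁻ α in Ioo 0 π, ENNReal.ofReal (exp v) *
        (ENNReal.ofReal (exp v * (exp v * sin φ * (exp v * sin φ * sin α))) *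
          ENNReal.ofReal ((exp u ^ 2 + exp v ^ 2 - 2 * (exp u * (cos θ * (exp v * cos φ) +
              sin θ * (exp v * sin φ * cos α)))) * exp v ^ 2 *
            (exp v ^ 2 + 1 - 2 * (exp v * cos φ)))⁻¹) =
      ENNReal.ofReal (exp (-u) / (2 * sin θ)) *
        ENNReal.ofReal (conjPoissonKernel v φ * greenKernel (u - v) θ φ) := by
  have sin_θ_pos := sin_pos_of_mem_Ioo hθ
  have sin_φ_pos := sin_pos_of_mem_Ioo hφ
  have kernel_nonneg := conjPoissonKernel_nonneg v hφ
  calc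
    _ = ∫⁻ α in Ioo 0 π, ENNReal.ofReal (exp (-u) / 2 * sin φ * conjPoissonKernel v φ) *
        ENNReal.ofReal (sin α / (cosh (u - v) - cos θ * cos φ - sin θ * sin φ * cos α)) := by
      refine setLIntegral_congr_fun measurableSet_Ioo fun α hα => ?_
      have sin_α_pos := sin_pos_of_mem_Ioo hα
      rw [← ENNReal.ofReal_mul (by positivity), ← ENNReal.ofReal_mul (by positivity), ← mul_assoc,
        exp_mul_sin_pow_mul_inv_eq, ENNReal.ofReal_mul (by positivity)]
    _ = _ := by
      rw [lintegral_const_mul' _ _ ENNReal.ofReal_ne_top,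
        lintegral_sin_div_eq_greenKernel (sub_ne_zero.2 huv) hθ hφ,
        ← ENNReal.ofReal_mul (by positivity), ← ENNReal.ofReal_mul (by positivity)]
      congr 1
      field_simp

variable {V : Type*} [NormedAddCommGroup V] [InnerProductSpace ℝ V] {e f x : V}

lemma norm_exp_smul_cos_smul_add_sin_smul (he : ‖e‖ = 1) (hf : ‖f‖ = 1) (hef : ⟪e, f⟫ = 0)
    (u θ : ℝ) : ‖exp u • (cos θ • e + sin θ • f)‖ = exp u := by
  have norm_sq : ‖cos θ • e + sin θ • f‖ ^ 2 = 1 := by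
    rw [norm_add_sq_real, inner_smul_left, inner_smul_right, hef, norm_smul, norm_smul, he, hf]
    simp
  rw [norm_smul, (pow_eq_one_iff_of_nonneg (norm_nonneg _) two_ne_zero).1 norm_sq, mul_one,
    norm_of_nonneg (exp_pos u).le]

variable [FiniteDimensional ℝ V] [MeasurableSpace V] [BorelSpace V]

lemma lintegral_inv_norm_sq_mul_eq_greenPotential (hV : Module.finrank ℝ V = 4) (he : ‖e‖ = 1)
    (hf : ‖f‖ = 1) (hef : ⟪e, f⟫ = 0) (u : ℝ) (hθ : θ ∈ Ioo 0 π)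
    (hx : x = exp u • (cos θ • e + sin θ • f)) :
    ∫⁻ y, ENNReal.ofReal (‖x - y‖ ^ 2 * ‖y‖ ^ 2 * ‖y - e‖ ^ 2)⁻¹ =
      ENNReal.ofReal (π * exp (-u) / sin θ) * greenPotential u θ := by
  have sin_θ_pos := sin_pos_of_mem_Ioo hθ
  have integrand (y : V) : (‖x - y‖ ^ 2 * ‖y‖ ^ 2 * ‖y - e‖ ^ 2)⁻¹ =
      ((exp u ^ 2 + ‖y‖ ^ 2 - 2 * (exp u * (cos θ * ⟪e, y⟫ + sin θ * ⟪f, y⟫))) * ‖y‖ ^ 2 *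
        (‖y‖ ^ 2 + 1 - 2 * ⟪e, y⟫))⁻¹ := by
    rw [norm_sub_sq_real, norm_sub_sq_real, hx, norm_exp_smul_cos_smul_add_sin_smul he hf hef, he,
      real_inner_smul_left, inner_add_left, real_inner_smul_left, real_inner_smul_left,
      real_inner_comm e y]
    ring_nf
  simp_rw [integrand]
  rw [lintegral_fun_inner_inner_norm (n := 1) hV he hf hef
      (F := fun p => ENNReal.ofReal ((exp u ^ 2 + p.2.2 ^ 2 - 2 * (exp u * (cos θ * p.1 +
        sin θ * p.2.1))) * p.2.2 ^ 2 * (p.2.2 ^ 2 + 1 - 2 * p.1))⁻¹) (by fun_prop),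
    lintegral_Ioi_zero_eq_lintegral_exp, unitSphereArea_two, greenPotential]
  simp only [pow_one, ← lintegral_const_mul' _ _ ENNReal.ofReal_ne_top]
  refine lintegral_congr_ae ?_
  filter_upwards [compl_mem_ae_iff.2 (measure_singleton u)] with v (hv : v ≠ u)
  refine setLIntegral_congr_fun measurableSet_Ioo fun φ hφ => ?_
  rw [lintegral_const_mul' _ _ ENNReal.ofReal_ne_top,
    lintegral_azimuth_eq_greenKernel hv.symm hθ hφ, ← mul_assoc,
    ← ENNReal.ofReal_mul (by positivity)]
  congr 2
  field_simp

end InnerIntegral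

section OuterIntegral

open InnerProductGeometry

variable {V : Type*} [NormedAddCommGroup V] [InnerProductSpace ℝ V] {e x : V}

lemma angle_mem_Ioo_of_notMem_span (hx : x ∉ ℝ ∙ e) : angle e x ∈ Ioo 0 π := by
  refine ⟨(angle_nonneg e x).lt_of_ne' fun h => ?_, (angle_le_pi e x).lt_of_ne fun h => ?_⟩
  · obtain ⟨-, r, -, rfl⟩ := angle_eq_zero_iff.1 h
    exact hx (Submodule.smul_mem _ r (Submodule.mem_span_singleton_self e))
  · obtain ⟨-, r, -, rfl⟩ := angle_eq_pi_iff.1 h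
    exact hx (Submodule.smul_mem _ r (Submodule.mem_span_singleton_self e))

lemma exists_orthogonal_eq_norm_smul_cos_angle_add_sin_angle (he : ‖e‖ = 1) (hx : x ∉ ℝ ∙ e) :
    ∃ f : V, ‖f‖ = 1 ∧ ⟪e, f⟫ = 0 ∧
      x = ‖x‖ • (cos (angle e x) • e + sin (angle e x) • f) := by
  have sin_pos : 0 < sin (angle e x) :=
    sin_pos_of_mem_Ioo (angle_mem_Ioo_of_notMem_span hx)
  have norm_pos : 0 < ‖x‖ := norm_pos_iff.2 fun h => hx (h ▸ Submodule.zero_mem _)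
  have inner_eq : ⟪e, x⟫ = cos (angle e x) * ‖x‖ := by
    rw [← cos_angle_mul_norm_mul_norm, he, one_mul]
  have norm_sq : ‖‖x‖⁻¹ • x - cos (angle e x) • e‖ ^ 2 = sin (angle e x) ^ 2 := by
    rw [norm_sub_sq_real, norm_smul, norm_smul, real_inner_smul_left, inner_smul_right,
      real_inner_comm, inner_eq, he, norm_inv, norm_norm, sin_sq]
    simp only [norm_eq_abs, mul_one, sq_abs]
    field_simp
    ring
  refine ⟨(sin (angle e x))⁻¹ • (‖x‖⁻¹ • x - cos (angle e x) • e), ?_, ?_, ?_⟩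
  · rw [norm_smul, (sq_eq_sq₀ (norm_nonneg _) sin_pos.le).1 norm_sq, norm_inv,
      norm_of_nonneg sin_pos.le, inv_mul_cancel₀ sin_pos.ne']
  · rw [inner_smul_right, inner_sub_right, inner_smul_right, inner_smul_right, inner_eq,
      real_inner_self_eq_norm_sq, he]
    field_simp
    simp
  · rw [smul_inv_smul₀ sin_pos.ne', add_sub_cancel, smul_inv_smul₀ norm_pos.ne']

lemma exp_mul_sin_sq_mul_inv_mul_eq (u : ℝ) {θ : ℝ} (hθ : sin θ ≠ 0) :
    exp u * (exp u * (exp u * sin θ) ^ 2) *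
        (((exp u ^ 2 + 1 - 2 * (exp u * cos θ)) * exp u ^ 2)⁻¹ * (π * exp (-u) / sin θ)) =
      π * conjPoissonKernel u θ := by
  rw [exp_sq_add_one, conjPoissonKernel, exp_neg,
    show 2 * (exp u * cosh u) - 2 * (exp u * cos θ) = 2 * exp u * (cosh u - cos θ) by ring]
  field_simp

@[fun_prop]
lemma measurable_conjPoissonKernel : Measurable fun p : ℝ × ℝ => conjPoissonKernel p.1 p.2 := by
  unfold conjPoissonKernel
  fun_prop

lemma measurable_lintegral_kernels :
    Measurable fun p : (ℝ × ℝ) × ℝ => ∫⁻ φ in Ioo 0 π,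
      ENNReal.ofReal (conjPoissonKernel p.2 φ * greenKernel (p.1.1 - p.2) p.1.2 φ) := by
  unfold conjPoissonKernel greenKernel
  exact .lintegral_prod_right (by fun_prop)

@[fun_prop]
lemma measurable_greenPotential : Measurable fun p : ℝ × ℝ => greenPotential p.1 p.2 :=
  measurable_lintegral_kernels.lintegral_prod_right

variable [FiniteDimensional ℝ V] [MeasurableSpace V] [BorelSpace V]

lemma ae_notMem_span_singleton (hV : 1 < Module.finrank ℝ V) (e : V) :
    ∀ᵐ x : V, x ∉ ℝ ∙ e := by
  refine compl_mem_ae_iff.2 (Measure.addHaar_submodule volume (ℝ ∙ e) fun span_eq_top => ?_)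
  have finrank_span_le := finrank_span_le_card (R := ℝ) ({e} : Set V)
  rw [span_eq_top, finrank_top, toFinset_singleton, Finset.card_singleton] at finrank_span_le
  exact hV.not_ge finrank_span_le

lemma ae_lintegral_inv_norm_sq_mul_eq_greenPotential (hV : Module.finrank ℝ V = 4)
    (he : ‖e‖ = 1) :
    ∀ᵐ x : V, ∫⁻ y, ENNReal.ofReal (‖x - y‖ ^ 2 * ‖y‖ ^ 2 * ‖y - e‖ ^ 2)⁻¹ =
      ENNReal.ofReal (π * exp (-log ‖x‖) / sin (angle e x)) *
        greenPotential (log ‖x‖) (angle e x) := by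
  filter_upwards [ae_notMem_span_singleton (by omega) e] with x hx
  obtain ⟨f, hf, hef, x_eq⟩ := exists_orthogonal_eq_norm_smul_cos_angle_add_sin_angle he hx
  have norm_pos : 0 < ‖x‖ := norm_pos_iff.2 fun h => hx (h ▸ Submodule.zero_mem _)
  refine lintegral_inv_norm_sq_mul_eq_greenPotential hV he hf hef (log ‖x‖)
    (angle_mem_Ioo_of_notMem_span hx) ?_
  rwa [exp_log norm_pos]

theorem lintegral_inv_norm_sq_mul_eq_lintegral_greenPotential (hV : Module.finrank ℝ V = 4)
    (he : ‖e‖ = 1) :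
    ∫⁻ x, ENNReal.ofReal (‖e - x‖ ^ 2 * ‖x‖ ^ 2)⁻¹ *
        ∫⁻ y, ENNReal.ofReal (‖x - y‖ ^ 2 * ‖y‖ ^ 2 * ‖y - e‖ ^ 2)⁻¹ =
      ENNReal.ofReal (4 * π ^ 2) *
        ∫⁻ u, ∫⁻ θ in Ioo 0 π, ENNReal.ofReal (conjPoissonKernel u θ) * greenPotential u θ := by
  let F (p : ℝ × ℝ) : ℝ≥0∞ := ENNReal.ofReal ((p.2 ^ 2 + 1 - 2 * p.1) * p.2 ^ 2)⁻¹ *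
    (ENNReal.ofReal (π * exp (-log p.2) / sin (arccos (p.1 / p.2))) *
      greenPotential (log p.2) (arccos (p.1 / p.2)))
  have measurable_F : Measurable F := by fun_prop
  calc
    _ = ∫⁻ x, F (⟪e, x⟫, ‖x‖) := by
      refine lintegral_congr_ae ?_
      filter_upwards [ae_lintegral_inv_norm_sq_mul_eq_greenPotential hV he] with x hx
      rw [hx, norm_sub_sq_real, angle, he, one_pow, one_mul, sub_add_eq_add_sub, add_comm 1]
    _ = _ := by
      rw [lintegral_fun_inner_norm (n := 2) hV he measurable_F, lintegral_Ioi_zero_eq_lintegral_exp,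
        unitSphereArea_three]
      simp only [← lintegral_const_mul' _ _ ENNReal.ofReal_ne_top]
      refine lintegral_congr fun u => setLIntegral_congr_fun measurableSet_Ioo fun θ hθ => ?_
      have sin_pos := sin_pos_of_mem_Ioo hθ
      simp only [F, mul_div_cancel_left₀ _ (exp_ne_zero u), arccos_cos hθ.1.le hθ.2.le, log_exp]
      simp only [← mul_assoc]
      congr 1
      rw [← ENNReal.ofReal_mul (by positivity), ← ENNReal.ofReal_mul (by positivity),
        ← ENNReal.ofReal_mul (by positivity), ← ENNReal.ofReal_mul' (by positivity),
        ← ENNReal.ofReal_mul (by positivity)]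
      congr 1
      linear_combination 4 * π * exp_mul_sin_sq_mul_inv_mul_eq u sin_pos.ne'

end OuterIntegral

section AngularIntegral

lemma lintegral_conjPoissonKernel_mul_greenPotential {u : ℝ} (hu : u ≠ 0) :
    ∫⁻ θ in Ioo 0 π, ENNReal.ofReal (conjPoissonKernel u θ) * greenPotential u θ =
      ∫⁻ v, ∑' n : ℕ+, ENNReal.ofReal (π ^ 2 / n * exp (-(n * (|u| + |v| + |u - v|)))) := by
  have measurable_integrand : Measurable fun p : ℝ × ℝ =>
      ENNReal.ofReal (conjPoissonKernel u p.1) * ∫⁻ φ in Ioo 0 π,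
        ENNReal.ofReal (conjPoissonKernel p.2 φ * greenKernel (u - p.2) p.1 φ) := by
    have := measurable_lintegral_kernels.comp (f := fun p : ℝ × ℝ => ((u, p.1), p.2)) (by fun_prop)
    fun_prop
  calc
    _ = ∫⁻ θ in Ioo 0 π, ∫⁻ v, ENNReal.ofReal (conjPoissonKernel u θ) * ∫⁻ φ in Ioo 0 π,
        ENNReal.ofReal (conjPoissonKernel v φ * greenKernel (u - v) θ φ) := by
      simp_rw [greenPotential, lintegral_const_mul' _ _ ENNReal.ofReal_ne_top]
    _ = ∫⁻ v, ∫⁻ θ in Ioo 0 π, ENNReal.ofReal (conjPoissonKernel u θ) * ∫⁻ φ in Ioo 0 π,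
        ENNReal.ofReal (conjPoissonKernel v φ * greenKernel (u - v) θ φ) :=
      lintegral_lintegral_swap measurable_integrand.aemeasurable
    _ = _ := by
      refine lintegral_congr_ae ?_
      filter_upwards [compl_mem_ae_iff.2 (measure_singleton 0),
        compl_mem_ae_iff.2 (measure_singleton u)] with v (hv : v ≠ 0) (huv : v ≠ u)
      rw [← lintegral_lintegral_kernels hu hv (sub_ne_zero.2 huv.symm)]
      refine setLIntegral_congr_fun measurableSet_Ioo fun θ hθ => ?_
      simp_rw [ENNReal.ofReal_mul (conjPoissonKernel_nonneg u hθ),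
        lintegral_const_mul' _ _ ENNReal.ofReal_ne_top]

lemma lintegral_lintegral_tsum_exp :
    ∫⁻ u, ∫⁻ v, ∑' n : ℕ+, ENNReal.ofReal (π ^ 2 / n * exp (-(n * (|u| + |v| + |u - v|)))) =
      ∑' n : ℕ+, ENNReal.ofReal (3 * π ^ 2 / (2 * n ^ 3)) := by
  simp_rw [fun u : ℝ => lintegral_tsum (μ := volume) (f := fun (n : ℕ+) v =>
    ENNReal.ofReal (π ^ 2 / n * exp (-(n * (|u| + |v| + |u - v|))))) fun n => by fun_prop]
  rw [lintegral_tsum fun n => by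
    exact (Measurable.lintegral_prod_right (by fun_prop)).aemeasurable]
  refine tsum_congr fun n => ?_
  have coefficient_nonneg : 0 ≤ π ^ 2 / n := by positivity
  have n_pos : (0 : ℝ) < n := mod_cast n.pos
  simp_rw [ENNReal.ofReal_mul coefficient_nonneg, lintegral_const_mul' _ _ ENNReal.ofReal_ne_top]
  rw [lintegral_lintegral_exp_neg_mul_abs_add_abs_add_abs_sub n_pos,
    ← ENNReal.ofReal_mul coefficient_nonneg]
  congr 1
  field_simp

end AngularIntegral

section Period

theorem lintegral_lintegral_K5 {V : Type*} [NormedAddCommGroup V] [InnerProductSpace ℝ V]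
    [FiniteDimensional ℝ V] [MeasurableSpace V] [BorelSpace V] (hV : Module.finrank ℝ V = 4)
    {e : V} (he : ‖e‖ = 1) :
    ∫⁻ x, ∫⁻ y, ENNReal.ofReal
        (‖e - x‖ ^ 2 * ‖x‖ ^ 2 * ‖x - y‖ ^ 2 * ‖y‖ ^ 2 * ‖y - e‖ ^ 2)⁻¹ =
      ENNReal.ofReal (6 * π ^ 4 * ∑' k : ℕ, (1 : ℝ) / (k + 1) ^ 3) := by
  have summable_cubes : Summable fun n : ℕ+ => 6 * π ^ 4 * ((1 : ℝ) / n ^ 3) :=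
    ((summable_one_div_nat_pow.2 (by norm_num)).comp_injective PNat.coe_injective).mul_left _
  calc
    _ = ∫⁻ x, ENNReal.ofReal (‖e - x‖ ^ 2 * ‖x‖ ^ 2)⁻¹ *
        ∫⁻ y, ENNReal.ofReal (‖x - y‖ ^ 2 * ‖y‖ ^ 2 * ‖y - e‖ ^ 2)⁻¹ := by
      refine lintegral_congr fun x => ?_
      rw [← lintegral_const_mul' _ _ ENNReal.ofReal_ne_top]
      refine lintegral_congr fun y => ?_
      rw [← ENNReal.ofReal_mul (by positivity), ← mul_inv]
      simp only [mul_assoc]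
    _ = ENNReal.ofReal (4 * π ^ 2) *
        ∫⁻ u, ∫⁻ θ in Ioo 0 π, ENNReal.ofReal (conjPoissonKernel u θ) * greenPotential u θ :=
      lintegral_inv_norm_sq_mul_eq_lintegral_greenPotential hV he
    _ = ENNReal.ofReal (4 * π ^ 2) * ∑' n : ℕ+, ENNReal.ofReal (3 * π ^ 2 / (2 * n ^ 3)) := by
      rw [← lintegral_lintegral_tsum_exp]
      congr 1
      refine lintegral_congr_ae ?_
      filter_upwards [compl_mem_ae_iff.2 (measure_singleton 0)] with u (hu : u ≠ 0)
      exact lintegral_conjPoissonKernel_mul_greenPotential hu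
    _ = ∑' n : ℕ+, ENNReal.ofReal (6 * π ^ 4 * (1 / n ^ 3)) := by
      rw [← ENNReal.tsum_mul_left]
      refine tsum_congr fun n => ?_
      rw [← ENNReal.ofReal_mul (by positivity)]
      congr 1
      ring
    _ = _ := by
      rw [← ENNReal.ofReal_tsum_of_nonneg (fun n => by positivity) summable_cubes, tsum_mul_left,
        tsum_pnat_eq_tsum_succ (f := fun n : ℕ => (1 : ℝ) / n ^ 3)]
      norm_cast

theorem integral_K5_general {V : Type*} [NormedAddCommGroup V] [InnerProductSpace ℝ V]
    [FiniteDimensional ℝ V] [MeasurableSpace V] [BorelSpace V] (hV : Module.finrank ℝ V = 4)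
    (e : V) (he : ‖e‖ = 1) :
    (∫ xy : V × V, (‖e - xy.1‖ ^ 2 * ‖xy.1‖ ^ 2 * ‖xy.1 - xy.2‖ ^ 2 * ‖xy.2‖ ^ 2 *
        ‖xy.2 - e‖ ^ 2)⁻¹) = 6 * π ^ 4 * ∑' k : ℕ, (1 : ℝ) / (k + 1) ^ 3 := by
  rw [integral_eq_lintegral_of_nonneg_ae (.of_forall fun xy => by positivity) (by fun_prop),
    Measure.volume_eq_prod, lintegral_prod _ (by fun_prop), lintegral_lintegral_K5 hV he,
    ENNReal.toReal_ofReal]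
  exact mul_nonneg (by positivity) (tsum_nonneg fun k => by positivity)

end Period

/-- The period of the completed primitive graph `P₃` (the complete graph `K₅`) equals
`6 ζ(3)`: for any unit vector `e ∈ ℝ⁴`,
`∫_{ℝ⁴×ℝ⁴} (‖e−x‖²‖x‖²‖x−y‖²‖y‖²‖y−e‖²)⁻¹ dx dy = 6 π⁴ ζ(3)`. -/
theorem integral_K5 (e : EuclideanSpace ℝ (Fin 4)) (he : ‖e‖ = 1) :
    (∫ xy : EuclideanSpace ℝ (Fin 4) × EuclideanSpace ℝ (Fin 4),
        (‖e - xy.1‖ ^ 2 * ‖xy.1‖ ^ 2 * ‖xy.1 - xy.2‖ ^ 2 * ‖xy.2‖ ^ 2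
          * ‖xy.2 - e‖ ^ 2)⁻¹) =
      6 * Real.pi ^ 4 * ∑' k : ℕ, (1 : ℝ) / (k + 1) ^ 3 :=
  integral_K5_general finrank_euclideanSpace_fin e he
end
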